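/- arXiv:1201.0609 — 3 statements merged into one kernel-verified Lean document; each statement's English description precedes it below -/
import Mathlib

section
/- Let φ : ℕ → ℂ. Suppose there exist a constant c ∈ ℂ and a complex Borel measure ν on the open unit disc 𝔻 such that φ(n) = c + ∫_𝔻 sⁿ dν(s) for all n ∈ ℕ and ∫_𝔻 |1−s|/(1−|s|) d|ν|(s) < ∞. Then φ belongs to the class 𝒞, and moreover ‖h_φ‖₁ + ‖k_φ‖₁ ≤ ∫_𝔻 |1−s|/(1−|s|) d|ν|(s). -/
open MeasureTheory Filter

noncomputable section

/-- The Hilbert space `ℓ²(ℕ; ℂ)`. -/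
abbrev ell2 : Type := lp (fun _ : ℕ => ℂ) 2

/-- A matrix `h : ℕ → ℕ → ℂ` is of trace class if it admits a representation
`h i j = ∑ₖ xₖ(i) · conj (yₖ(j))` with `xₖ, yₖ ∈ ℓ²(ℕ; ℂ)` and `∑ₖ ‖xₖ‖₂·‖yₖ‖₂ < ∞`. -/
def IsTraceClass (h : ℕ → ℕ → ℂ) : Prop :=
  ∃ x y : ℕ → ell2,
    (Summable fun k => ‖x k‖ * ‖y k‖) ∧
    ∀ i j, h i j = ∑' k, (x k : ℕ → ℂ) i * (starRingEnd ℂ) ((y k : ℕ → ℂ) j)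

/-- The trace norm of a matrix: the infimum of `∑ₖ ‖xₖ‖₂·‖yₖ‖₂` over all representations
`h i j = ∑ₖ xₖ(i) · conj (yₖ(j))` as above. -/
def traceNorm (h : ℕ → ℕ → ℂ) : ℝ :=
  sInf { c : ℝ | ∃ x y : ℕ → ell2,
    (Summable fun k => ‖x k‖ * ‖y k‖) ∧
    (∀ i j, h i j = ∑' k, (x k : ℕ → ℂ) i * (starRingEnd ℂ) ((y k : ℕ → ℂ) j)) ∧
    c = ∑' k, ‖x k‖ * ‖y k‖ }

/-- The Hankel matrix `h_φ(i,j) = φ(i+j) − φ(i+j+1)`. -/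
def hankelH (φ : ℕ → ℂ) : ℕ → ℕ → ℂ := fun i j => φ (i+j) - φ (i+j+1)

/-- The Hankel matrix `k_φ(i,j) = φ(i+j+1) − φ(i+j+2)`. -/
def hankelK (φ : ℕ → ℂ) : ℕ → ℕ → ℂ := fun i j => φ (i+j+1) - φ (i+j+2)

/-- The class `𝒞`: both Hankel matrices `h_φ` and `k_φ` are of trace class. -/
def MemC (φ : ℕ → ℂ) : Prop := IsTraceClass (hankelH φ) ∧ IsTraceClass (hankelK φ)

/-- The norm `‖φ‖_𝒞 = ‖h_φ‖₁ + ‖k_φ‖₁ + |c|`, where `c = lim_{n→∞} φ(n)`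
(expressed via `limUnder`, which gives the limit whenever it exists). -/
def CNorm (φ : ℕ → ℂ) : ℝ :=
  traceNorm (hankelH φ) + traceNorm (hankelK φ) + ‖limUnder atTop φ‖

open scoped InnerProductSpace in
theorem aux_basis {ι H : Type*} [Countable ι] [NormedAddCommGroup H] [InnerProductSpace ℂ H]
    [CompleteSpace H] (v : ι → H) :
    ∃ e : ℕ → H, ∀ m n, HasSum (fun k => ⟪v m, e k⟫_ℂ * ⟪e k, v n⟫_ℂ) ⟪v m, v n⟫_ℂ := by
  obtain ⟨w, b, -⟩ := exists_hilbertBasis ℂ H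
  let S : Set w := ⋃ m : ι, Function.support (fun k : w => ⟪v m, b k⟫_ℂ * ⟪b k, v m⟫_ℂ)
  have hS : S.Countable :=
    Set.countable_iUnion fun m => (b.hasSum_inner_mul_inner (v m) (v m)).summable.countable_support
  have hz : ∀ k, k ∉ S → ∀ m, ⟪b k, v m⟫_ℂ = 0 := by
    intro k hk m
    simp only [S, Set.mem_iUnion, Function.mem_support, not_exists, not_not] at hk
    rcases mul_eq_zero.1 (hk m) with h | h
    · rw [← inner_conj_symm, h, map_zero]
    · exact h
  have : Countable S := hS.to_subtype
  obtain ⟨g, hg⟩ := exists_injective_nat S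
  refine ⟨Function.extend g (fun k : S => b k) 0, fun m n => ?_⟩
  rw [← hg.hasSum_iff]
  · have h := b.hasSum_inner_mul_inner (v m) (v n)
    rw [← Subtype.coe_injective.hasSum_iff (f := fun k => ⟪v m, b k⟫_ℂ * ⟪b k, v n⟫_ℂ) (g := ((↑) : S → w))] at h
    · convert h using 1
      ext k
      simp [hg.extend_apply]
    · intro k hk
      have hk' : k ∉ S := by simpa using hk
      simp [hz k hk' n]
  · intro k hk
    rw [Function.extend_apply' _ _ _ (by simpa using hk)]
    simp

open scoped InnerProductSpace in
theorem aux_hilbert {H : Type*} [NormedAddCommGroup H] [InnerProductSpace ℂ H]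
    [CompleteSpace H] (a b : ℕ → H) (C : ℝ)
    (ha : HasSum (fun i => ‖a i‖ ^ 2) C) (hb : HasSum (fun i => ‖b i‖ ^ 2) C)
    (h : ℕ → ℕ → ℂ) (hh : ∀ i j, h i j = ⟪b j, a i⟫_ℂ) :
    IsTraceClass h ∧ traceNorm h ≤ C := by
  obtain ⟨e, he⟩ := aux_basis (Sum.elim a b)
  have key : ∀ v : ℕ → H, HasSum (fun i => ‖v i‖ ^ 2) C →
      (∀ i, HasSum (fun k => ⟪v i, e k⟫_ℂ * ⟪e k, v i⟫_ℂ) ⟪v i, v i⟫_ℂ) →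
      ∃ x : ℕ → ell2, (∀ k i, (x k : ℕ → ℂ) i = ⟪e k, v i⟫_ℂ) ∧
        HasSum (fun k => ‖x k‖ ^ 2) C := by
    intro v hv hve
    have h1 : ∀ i, HasSum (fun k => ‖⟪e k, v i⟫_ℂ‖ ^ 2) (‖v i‖ ^ 2) := by
      intro i
      have := Complex.hasSum_re (hve i)
      rw [inner_self_eq_norm_sq_to_K] at this
      convert this using 1
      · ext k
        rw [← inner_conj_symm (v i) (e k), ← Complex.normSq_eq_conj_mul_self, Complex.ofReal_re,
          Complex.normSq_eq_norm_sq]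
      · norm_cast
    have h2 : Summable (fun p : ℕ × ℕ => ‖⟪e p.2, v p.1⟫_ℂ‖ ^ 2) := by
      rw [summable_prod_of_nonneg (fun _ => by positivity)]
      refine ⟨fun i => (h1 i).summable, ?_⟩
      simpa only [(h1 _).tsum_eq] using hv.summable
    have h3 : HasSum (fun p : ℕ × ℕ => ‖⟪e p.2, v p.1⟫_ℂ‖ ^ 2) C := by
      have := h2.hasSum
      rwa [← hv.unique (this.prod_fiberwise h1)] at this
    have h4 : HasSum (fun p : ℕ × ℕ => ‖⟪e p.1, v p.2⟫_ℂ‖ ^ 2) C :=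
      (Equiv.prodComm ℕ ℕ).hasSum_iff.2 h3
    have h5 : ∀ k, Summable (fun i => ‖⟪e k, v i⟫_ℂ‖ ^ 2) := fun k => h4.summable.prod_factor k
    have hm : ∀ k, Memℓp (fun i => ⟪e k, v i⟫_ℂ) 2 := fun k => by
      rw [memℓp_gen_iff (by norm_num)]
      simpa using h5 k
    refine ⟨fun k => ⟨_, hm k⟩, fun k i => rfl, h4.prod_fiberwise fun k => ?_⟩
    have := lp.hasSum_norm (p := 2) (by norm_num) (⟨_, hm k⟩ : ell2)
    simpa using this
  obtain ⟨x, hx, hxs⟩ := key a ha (fun i => he (Sum.inl i) (Sum.inl i))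
  obtain ⟨y, hy, hys⟩ := key b hb (fun i => he (Sum.inr i) (Sum.inr i))
  have hle : ∀ k, ‖x k‖ * ‖y k‖ ≤ (‖x k‖ ^ 2 + ‖y k‖ ^ 2) / 2 := fun k => by
    nlinarith [sq_nonneg (‖x k‖ - ‖y k‖)]
  have hs2 := (hxs.add hys).div_const 2
  have hs : Summable fun k => ‖x k‖ * ‖y k‖ :=
    Summable.of_nonneg_of_le (fun _ => by positivity) hle hs2.summable
  have hr : ∀ i j, h i j = ∑' k, (x k : ℕ → ℂ) i * (starRingEnd ℂ) ((y k : ℕ → ℂ) j) := by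
    intro i j
    rw [hh]
    refine (he (Sum.inr j) (Sum.inl i)).tsum_eq.symm.trans ?_
    refine tsum_congr fun k => ?_
    rw [hx, hy, inner_conj_symm, mul_comm]
    rfl
  refine ⟨⟨x, y, hs, hr⟩, ?_⟩
  unfold traceNorm
  refine le_trans (csInf_le (a := ∑' k, ‖x k‖ * ‖y k‖) ⟨0, ?_⟩ ⟨x, y, hs, hr, rfl⟩) ?_
  · rintro _ ⟨x, y, -, -, rfl⟩
    exact tsum_nonneg fun k => by positivity
  · have := hasSum_le hle hs.hasSum hs2
    linarith

open scoped InnerProductSpace in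
theorem aux_int (ρ : Measure (Metric.ball (0:ℂ) 1)) (g : Metric.ball (0:ℂ) 1 → ℂ)
    (hg : AEStronglyMeasurable g ρ)
    (hint : Integrable (fun s : Metric.ball (0:ℂ) 1 => ‖g s‖ / (1 - ‖(s : ℂ)‖ ^ 2)) ρ)
    (h : ℕ → ℕ → ℂ) (hh : ∀ i j, h i j = ∫ s, g s * (s : ℂ) ^ (i + j) ∂ρ) :
    IsTraceClass h ∧ traceNorm h ≤ ∫ s, ‖g s‖ / (1 - ‖(s : ℂ)‖ ^ 2) ∂ρ := by
  have hlt : ∀ s : Metric.ball (0:ℂ) 1, ‖(s : ℂ)‖ < 1 := fun s => mem_ball_zero_iff.1 s.2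
  have hlt2 : ∀ s : Metric.ball (0:ℂ) 1, ‖(s : ℂ)‖ ^ 2 < 1 := fun s => by
    nlinarith [hlt s, norm_nonneg (s : ℂ)]
  have hsum : ∀ s : Metric.ball (0:ℂ) 1,
      HasSum (fun i : ℕ => ‖g s‖ * (‖(s : ℂ)‖ ^ 2) ^ i) (‖g s‖ / (1 - ‖(s : ℂ)‖ ^ 2)) := fun s => by
    rw [div_eq_mul_inv]
    exact (hasSum_geometric_of_lt_one (by positivity) (hlt2 s)).mul_left _
  have hcoe : AEStronglyMeasurable (fun s : Metric.ball (0:ℂ) 1 => (s : ℂ)) ρ :=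
    continuous_subtype_val.aestronglyMeasurable
  have hsq : AEStronglyMeasurable (fun s => ((Real.sqrt ‖g s‖ : ℝ) : ℂ)) ρ :=
    (Complex.continuous_ofReal.comp Real.continuous_sqrt).comp_aestronglyMeasurable hg.norm
  have hmeas : ∀ i : ℕ, AEStronglyMeasurable
      (fun s : Metric.ball (0:ℂ) 1 => ‖g s‖ * (‖(s : ℂ)‖ ^ 2) ^ i) ρ := fun i =>
    hg.norm.mul ((hcoe.norm.pow 2).pow i)
  have hI : ∀ i : ℕ, Integrable (fun s : Metric.ball (0:ℂ) 1 => ‖g s‖ * (‖(s : ℂ)‖ ^ 2) ^ i) ρ := by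
    intro i
    refine hint.mono' (hmeas i) (Eventually.of_forall fun s => ?_)
    rw [Real.norm_of_nonneg (by positivity)]
    exact le_hasSum (hsum s) i fun _ _ => by positivity
  have hS : HasSum (fun i : ℕ => ∫ s, ‖g s‖ * (‖(s : ℂ)‖ ^ 2) ^ i ∂ρ)
      (∫ s, ‖g s‖ / (1 - ‖(s : ℂ)‖ ^ 2) ∂ρ) := by
    refine hasSum_integral_of_dominated_convergence
      (fun i s => ‖g s‖ * (‖(s : ℂ)‖ ^ 2) ^ i) hmeas
      (fun i => Eventually.of_forall fun s => ?_)
      (Eventually.of_forall fun s => (hsum s).summable) ?_ (Eventually.of_forall hsum)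
    · rw [Real.norm_of_nonneg (by positivity)]
    · simpa only [(hsum _).tsum_eq] using hint
  have key : ∀ (u : Metric.ball (0:ℂ) 1 → ℂ) (i : ℕ), AEStronglyMeasurable u ρ →
      (∀ s, ‖u s‖ ^ 2 = ‖g s‖ * (‖(s : ℂ)‖ ^ 2) ^ i) →
      ∃ a : Lp ℂ 2 ρ, (a =ᵐ[ρ] u) ∧ ‖a‖ ^ 2 = ∫ s, ‖g s‖ * (‖(s : ℂ)‖ ^ 2) ^ i ∂ρ := by
    intro u i hu hn
    have hm : MemLp u 2 ρ := by
      rw [memLp_two_iff_integrable_sq_norm hu]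
      simpa only [hn] using hI i
    refine ⟨hm.toLp u, hm.coeFn_toLp, ?_⟩
    have h1 : ((‖hm.toLp u‖ ^ 2 : ℝ) : ℂ) = ⟪hm.toLp u, hm.toLp u⟫_ℂ := by
      rw [inner_self_eq_norm_sq_to_K]; norm_cast
    rw [L2.inner_def] at h1
    apply Complex.ofReal_injective
    rw [h1, ← integral_complex_ofReal]
    refine integral_congr_ae ?_
    filter_upwards [hm.coeFn_toLp] with s hs
    rw [hs, ← hn, inner_self_eq_norm_sq_to_K]
    norm_cast
  have hsg : ∀ s, Real.sqrt ‖g s‖ ^ 2 = ‖g s‖ := fun s => Real.sq_sqrt (norm_nonneg _)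
  choose a ha hna using fun i : ℕ => key
    (fun s => g s / ((Real.sqrt ‖g s‖ : ℝ) : ℂ) * (s : ℂ) ^ i) i
    ((hg.div₀ hsq).mul (hcoe.pow i)) (fun s => by
      rw [norm_mul, norm_div, norm_pow, Complex.norm_real, Real.norm_of_nonneg (Real.sqrt_nonneg _),
        mul_pow, div_pow, hsg, ← pow_mul, ← pow_mul, mul_comm i]
      congr 1
      by_cases h0 : ‖g s‖ = 0
      · simp [h0]
      · field_simp)
  choose b hb hnb using fun i : ℕ => key
    (fun s => ((Real.sqrt ‖g s‖ : ℝ) : ℂ) * (starRingEnd ℂ) (s : ℂ) ^ i) i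
    (hsq.mul ((Complex.continuous_conj.comp_aestronglyMeasurable hcoe).pow i)) (fun s => by
      rw [norm_mul, norm_pow, Complex.norm_real, Real.norm_of_nonneg (Real.sqrt_nonneg _),
        mul_pow, hsg, ← pow_mul, ← pow_mul, mul_comm i, Complex.norm_conj])
  refine aux_hilbert a b _ (by simpa only [hna] using hS) (by simpa only [hnb] using hS) h ?_
  intro i j
  rw [hh, L2.inner_def]
  refine integral_congr_ae ?_
  filter_upwards [ha i, hb j] with s h1 h2
  rw [h1, h2]
  simp only [RCLike.inner_apply, map_mul, map_pow, Complex.conj_conj, Complex.conj_ofReal]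
  by_cases h0 : g s = 0
  · simp [h0]
  · have : ((Real.sqrt ‖g s‖ : ℝ) : ℂ) ≠ 0 := by
      simpa [Real.sqrt_eq_zero'] using h0
    field_simp
    ring

/-- If `φ(n) = c + ∫_𝔻 sⁿ dν(s)` for a complex Borel measure `ν` on the open
unit disc (written in polar form `ν = f · ρ` with `ρ = |ν|` a finite Borel measure and `‖f‖ = 1`
a.e.) with `∫_𝔻 |1−s|/(1−|s|) d|ν|(s) < ∞`, then `φ ∈ 𝒞` and
`‖h_φ‖₁ + ‖k_φ‖₁ ≤ ∫_𝔻 |1−s|/(1−|s|) d|ν|(s)`. -/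
theorem stmt0 (φ : ℕ → ℂ) (c : ℂ) (ρ : Measure (Metric.ball (0:ℂ) 1)) [IsFiniteMeasure ρ]
    (f : Metric.ball (0:ℂ) 1 → ℂ)
    (hf : AEStronglyMeasurable f ρ)
    (hf1 : ∀ᵐ s ∂ρ, ‖f s‖ = 1)
    (hrep : ∀ n : ℕ, φ n = c + ∫ s, f s * (s : ℂ) ^ n ∂ρ)
    (hint : Integrable (fun s : Metric.ball (0:ℂ) 1 => ‖1 - (s : ℂ)‖ / (1 - ‖(s : ℂ)‖)) ρ) :
    MemC φ ∧
      traceNorm (hankelH φ) + traceNorm (hankelK φ) ≤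
        ∫ s, ‖1 - (s : ℂ)‖ / (1 - ‖(s : ℂ)‖) ∂ρ := by
  have hlt : ∀ s : Metric.ball (0:ℂ) 1, ‖(s : ℂ)‖ < 1 := fun s => mem_ball_zero_iff.1 s.2
  have hcoe : AEStronglyMeasurable (fun s : Metric.ball (0:ℂ) 1 => (s : ℂ)) ρ :=
    continuous_subtype_val.aestronglyMeasurable
  have hfi : ∀ n : ℕ, Integrable (fun s : Metric.ball (0:ℂ) 1 => f s * (s : ℂ) ^ n) ρ := by
    intro n
    refine (integrable_const (1:ℝ)).mono' (hf.mul (hcoe.pow n)) ?_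
    filter_upwards [hf1] with s hs
    rw [norm_mul, hs, one_mul, norm_pow]
    exact pow_le_one₀ (norm_nonneg _) (hlt s).le
  have hdiff : ∀ n : ℕ, φ n - φ (n + 1) = ∫ s, f s * (1 - (s : ℂ)) * (s : ℂ) ^ n ∂ρ := by
    intro n
    rw [hrep, hrep, add_sub_add_left_eq_sub, ← integral_sub (hfi _) (hfi _)]
    congr 1
    ext s
    ring
  have hm1 : AEStronglyMeasurable (fun s : Metric.ball (0:ℂ) 1 => f s * (1 - (s : ℂ))) ρ :=
    hf.mul (aestronglyMeasurable_const.sub hcoe)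
  have hm2 : AEStronglyMeasurable
      (fun s : Metric.ball (0:ℂ) 1 => f s * (1 - (s : ℂ)) * (s : ℂ)) ρ := hm1.mul hcoe
  have hden : AEStronglyMeasurable
      (fun s : Metric.ball (0:ℂ) 1 => 1 - ‖(s : ℂ)‖ ^ 2) ρ :=
    aestronglyMeasurable_const.sub (hcoe.norm.pow 2)
  have hpt : ∀ r t : ℝ, 0 ≤ r → r < 1 → 0 ≤ t → t / (1 - r ^ 2) + t * r / (1 - r ^ 2) = t / (1 - r) := by
    intro r t h0 h1 _
    have h2 : 1 - r ≠ 0 := by linarith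
    have h3 : 1 + r ≠ 0 := by linarith
    have : 1 - r ^ 2 = (1 - r) * (1 + r) := by ring
    rw [this]
    field_simp
  have hnn : ∀ r t : ℝ, 0 ≤ r → r < 1 → 0 ≤ t → 0 ≤ t / (1 - r ^ 2) := by
    intro r t h0 h1 ht
    exact div_nonneg ht (by nlinarith)
  have hi1 : Integrable
      (fun s : Metric.ball (0:ℂ) 1 => ‖f s * (1 - (s : ℂ))‖ / (1 - ‖(s : ℂ)‖ ^ 2)) ρ := by
    refine hint.mono' (hm1.norm.div₀ hden) ?_
    filter_upwards [hf1] with s hs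
    rw [norm_mul, hs, one_mul, Real.norm_of_nonneg (hnn _ _ (norm_nonneg _) (hlt s) (norm_nonneg _)),
      ← hpt _ _ (norm_nonneg _) (hlt s) (norm_nonneg _)]
    have := hnn _ (‖1 - (s : ℂ)‖ * ‖(s : ℂ)‖) (norm_nonneg _) (hlt s) (by positivity)
    linarith
  have hi2 : Integrable
      (fun s : Metric.ball (0:ℂ) 1 => ‖f s * (1 - (s : ℂ)) * (s : ℂ)‖ / (1 - ‖(s : ℂ)‖ ^ 2)) ρ := by
    refine hint.mono' (hm2.norm.div₀ hden) ?_
    filter_upwards [hf1] with s hs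
    rw [norm_mul, norm_mul, hs, one_mul,
      Real.norm_of_nonneg (hnn _ _ (norm_nonneg _) (hlt s) (by positivity)),
      ← hpt _ _ (norm_nonneg _) (hlt s) (norm_nonneg _)]
    have := hnn _ (‖1 - (s : ℂ)‖) (norm_nonneg _) (hlt s) (by positivity)
    linarith
  obtain ⟨t1, b1⟩ := aux_int ρ _ hm1 hi1 (hankelH φ) (fun i j => hdiff (i + j))
  obtain ⟨t2, b2⟩ := aux_int ρ _ hm2 hi2 (hankelK φ) (fun i j => by
    refine (hdiff (i + j + 1)).trans ?_
    congr 1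
    ext s
    ring)
  refine ⟨⟨t1, t2⟩, (add_le_add b1 b2).trans_eq ?_⟩
  rw [← integral_add hi1 hi2]
  refine integral_congr_ae ?_
  filter_upwards [hf1] with s hs
  rw [norm_mul, norm_mul, norm_mul, hs, one_mul]
  exact hpt _ _ (norm_nonneg _) (hlt s) (norm_nonneg _)

end
end

section
/- Let φ : ℕ → ℂ belong to the class 𝒞. Then there exist a constant c ∈ ℂ and a complex Borel measure ν on the open unit disc 𝔻 such that φ(n) = c + ∫_𝔻 sⁿ dν(s) for all n ∈ ℕ, ∫_𝔻 |1−s|/(1−|s|) d|ν|(s) < ∞, and moreover |c| + ∫_𝔻 |1−s|/(1−|s|) d|ν|(s) ≤ (8/π)·‖φ‖_𝒞. -/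
open MeasureTheory Filter

noncomputable section

def bet : ℕ → ℝ
  | 0 => 1
  | (m+1) => bet m * ((m:ℝ) + 3/2) / ((m:ℝ)+1)

lemma bet_pos (m : ℕ) : 0 < bet m := by
  induction m with
  | zero => simp [bet]
  | succ m ih => rw [bet]; positivity

lemma bet_rec (m : ℕ) : ((m:ℝ)+1) * bet (m+1) = ((m:ℝ) + 3/2) * bet m := by
  rw [bet]; field_simp

lemma bet_wallis (m : ℕ) : bet m ^ 2 * (2*(m:ℝ)+3) * Real.Wallis.W (m+1) = 4 * ((m:ℝ)+1)^2 := by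
  induction m with
  | zero => simp [bet, Real.Wallis.W]; norm_num
  | succ m ih =>
    rw [Real.Wallis.W_succ, bet]
    have h : (2*(m:ℝ)+3) ≠ 0 := by positivity
    have h2 : ((m:ℝ)+1) ≠ 0 := by positivity
    have : bet m ^ 2 * Real.Wallis.W (m+1) = 4 * ((m:ℝ)+1)^2 / (2*(m:ℝ)+3) := by
      rw [eq_div_iff h, ← ih]; ring
    push_cast
    have e : (bet m * ((m:ℝ) + 3 / 2) / ((m:ℝ) + 1)) ^ 2 * (2 * ((m:ℝ) + 1) + 3) *
      (Real.Wallis.W (m + 1) * ((2 * ((m:ℝ) + 1) + 2) / (2 * ((m:ℝ) + 1) + 1) * ((2 * ((m:ℝ) + 1) + 2) / (2 * ((m:ℝ) + 1) + 3))))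
      = (bet m ^ 2 * Real.Wallis.W (m+1)) * ((((m:ℝ) + 3 / 2) / ((m:ℝ) + 1)) ^ 2 * (2 * ((m:ℝ) + 1) + 3) *
       ((2 * ((m:ℝ) + 1) + 2) / (2 * ((m:ℝ) + 1) + 1) * ((2 * ((m:ℝ) + 1) + 2) / (2 * ((m:ℝ) + 1) + 3)))) := by ring
    rw [e, this]
    have h3 : (2*((m:ℝ)+1)+3) ≠ 0 := by positivity
    have h4 : (2*((m:ℝ)+1)+1) ≠ 0 := by positivity
    field_simp
    ring

lemma bet_sq_le (m : ℕ) : bet m ^ 2 / ((m:ℝ)+1) ≤ 4 / Real.pi := by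
  have h1 := bet_wallis m
  have h2 := Real.Wallis.le_W (m+1)
  push_cast at h2
  have hpi := Real.pi_pos
  rw [div_le_div_iff₀ (by positivity) hpi]
  have h3 : (2*(m:ℝ)+3)/(2*(m:ℝ)+4) * (Real.pi/2) ≤ Real.Wallis.W (m+1) := by
    convert h2 using 3 <;> ring
  have h4 : bet m ^ 2 * (2*(m:ℝ)+3) * ((2*(m:ℝ)+3)/(2*(m:ℝ)+4) * (Real.pi/2)) ≤ 4 * ((m:ℝ)+1)^2 := by
    rw [← h1]; gcongr
  have h5 : bet m ^ 2 * Real.pi * (2*(m:ℝ)+3)^2 ≤ 4 * ((m:ℝ)+1) * (4 * ((m:ℝ)+1) * ((m:ℝ)+2)) := by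
    have : bet m ^ 2 * (2*(m:ℝ)+3) * ((2*(m:ℝ)+3)/(2*(m:ℝ)+4) * (Real.pi/2)) = bet m ^ 2 * Real.pi * (2*(m:ℝ)+3)^2 / (4 * ((m:ℝ)+2)) := by
      field_simp; ring
    rw [this, div_le_iff₀ (by positivity)] at h4
    linarith
  have h6 : (4 * ((m:ℝ)+1) * ((m:ℝ)+2)) ≤ (2*(m:ℝ)+3)^2 := by nlinarith
  have h7 : bet m ^ 2 * Real.pi * (2*(m:ℝ)+3)^2 ≤ 4 * ((m:ℝ)+1) * (2*(m:ℝ)+3)^2 :=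
    h5.trans (by gcongr)
  exact le_of_mul_le_mul_right h7 (by positivity)

lemma bet_le (m : ℕ) : bet m ≤ 2 * ((m:ℝ)+1) := by
  have h := bet_sq_le m
  have hpi := Real.pi_gt_three
  have h4 : 4 / Real.pi ≤ 4 := by
    rw [div_le_iff₀ (by positivity)]; nlinarith
  have h5 := h.trans h4
  rw [div_le_iff₀ (by positivity)] at h5
  have hp := bet_pos m
  have hm : (0:ℝ) ≤ m := by positivity
  nlinarith

lemma bet_conv (N : ℕ) : ∑ p ∈ Finset.HasAntidiagonal.antidiagonal N, bet p.1 * bet p.2 = ((N:ℝ)+1)*((N:ℝ)+2)/2 := by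
  induction N with
  | zero => simp [bet]
  | succ N ih =>
    set S := ∑ p ∈ Finset.HasAntidiagonal.antidiagonal N, bet p.1 * bet p.2 with hS
    set S' := ∑ p ∈ Finset.HasAntidiagonal.antidiagonal (N+1), bet p.1 * bet p.2 with hS'
    have e1 : ∑ p ∈ Finset.HasAntidiagonal.antidiagonal (N+1), (p.1:ℝ) * (bet p.1 * bet p.2) = ∑ p ∈ Finset.HasAntidiagonal.antidiagonal N, ((p.1:ℝ)+3/2) * (bet p.1 * bet p.2) := by
      rw [Finset.Nat.sum_antidiagonal_succ]
      simp only [Nat.cast_zero, zero_mul, zero_add]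
      apply Finset.sum_congr rfl
      intro p _
      have := bet_rec p.1
      push_cast
      linear_combination bet p.2 * this
    have e2 : ∑ p ∈ Finset.HasAntidiagonal.antidiagonal (N+1), (p.2:ℝ) * (bet p.1 * bet p.2) = ∑ p ∈ Finset.HasAntidiagonal.antidiagonal N, ((p.2:ℝ)+3/2) * (bet p.1 * bet p.2) := by
      rw [Finset.Nat.sum_antidiagonal_succ']
      simp only [Nat.cast_zero, zero_mul, zero_add]
      apply Finset.sum_congr rfl
      intro p _
      have := bet_rec p.2
      push_cast
      linear_combination bet p.1 * this
    have e3 : ((N:ℝ)+1) * S' = ((N:ℝ)+3) * S := by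
      have a1 : ((N:ℝ)+1) * S' = ∑ p ∈ Finset.HasAntidiagonal.antidiagonal (N+1), (p.1:ℝ) * (bet p.1 * bet p.2) + ∑ p ∈ Finset.HasAntidiagonal.antidiagonal (N+1), (p.2:ℝ) * (bet p.1 * bet p.2) := by
        rw [← Finset.sum_add_distrib, hS', Finset.mul_sum]
        apply Finset.sum_congr rfl
        intro p hp
        have := Finset.HasAntidiagonal.mem_antidiagonal.1 hp
        have : (p.1:ℝ) + p.2 = N + 1 := by exact_mod_cast this
        rw [← this]; ring
      rw [a1, e1, e2, ← Finset.sum_add_distrib, hS, Finset.mul_sum]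
      apply Finset.sum_congr rfl
      intro p hp
      have := Finset.HasAntidiagonal.mem_antidiagonal.1 hp
      have : (p.1:ℝ) + p.2 = N := by exact_mod_cast this
      rw [← this]; ring
    rw [ih] at e3
    push_cast
    have : ((N:ℝ)+1) ≠ 0 := by positivity
    apply mul_left_cancel₀ this
    rw [e3]; ring

/-- convolution -/
def gam (ε n : ℕ) : ℝ := ∑ p ∈ Finset.HasAntidiagonal.antidiagonal n, bet (2*p.1+ε) * bet (2*p.2+ε)

lemma gam_nonneg (ε n : ℕ) : 0 ≤ gam ε n :=
  Finset.sum_nonneg fun _ _ => mul_nonneg (bet_pos _).le (bet_pos _).le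

lemma sum_even_odd (f : ℕ → ℝ) (N : ℕ) : ∑ p ∈ Finset.range (2*N+1), f p =
    ∑ i ∈ Finset.range (N+1), f (2*i) + ∑ i ∈ Finset.range N, f (2*i+1) := by
  induction N with
  | zero => simp
  | succ N ih =>
    rw [show 2*(N+1)+1 = (2*N+1)+1+1 by ring, Finset.sum_range_succ, Finset.sum_range_succ, ih,
      Finset.sum_range_succ (fun i => f (2*i)) (N+1), Finset.sum_range_succ (fun i => f (2*i+1)) N]
    rw [show 2*N+1+1 = 2*(N+1) by ring]
    ring

lemma gam_zero : gam 0 0 = 1 := by simp [gam, bet]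

lemma gam_succ (n : ℕ) : gam 0 (n+1) + gam 1 n = (2*((n:ℝ)+1)+1)*((n:ℝ)+1+1) := by
  have h := bet_conv (2*(n+1))
  rw [Finset.Nat.sum_antidiagonal_eq_sum_range_succ_mk, sum_even_odd] at h
  rw [gam, gam, Finset.Nat.sum_antidiagonal_eq_sum_range_succ_mk, Finset.Nat.sum_antidiagonal_eq_sum_range_succ_mk]
  push_cast at h
  have e : (2*((n:ℝ)+1)+1)*((n:ℝ)+1+1) = (2 * ((n:ℝ) + 1) + 1) * (2 * ((n:ℝ) + 1) + 2) / 2 := by ring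
  rw [e, ← h]
  congr 1
  · apply Finset.sum_congr rfl
    intro i hi
    have := Finset.mem_range.1 hi
    rw [show 2*(n+1)-2*i = 2*(n+1-i) + 0 by omega]
    rfl
  · apply Finset.sum_congr rfl
    intro i hi
    have := Finset.mem_range.1 hi
    rw [show 2*(n+1)-(2*i+1) = 2*(n-i)+1 by omega]

lemma gam_le (ε n : ℕ) : gam ε n ≤ 4 * (2*(n:ℝ)+ε+1)^3 := by
  have : gam ε n ≤ ∑ p ∈ Finset.HasAntidiagonal.antidiagonal n, (2 * (2*(n:ℝ)+ε+1)) * (2 * (2*(n:ℝ)+ε+1)) := by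
    apply Finset.sum_le_sum
    intro p hp
    have := Finset.HasAntidiagonal.mem_antidiagonal.1 hp
    have : (p.1:ℝ) + p.2 = n := by exact_mod_cast this
    have h1 := bet_le (2*p.1+ε)
    have h2 := bet_le (2*p.2+ε)
    push_cast at h1 h2
    have : (0:ℝ) ≤ p.1 := by positivity
    have : (0:ℝ) ≤ p.2 := by positivity
    apply mul_le_mul _ _ (bet_pos _).le (by positivity) <;> linarith
  refine this.trans ?_
  rw [Finset.sum_const, Finset.Nat.card_antidiagonal, nsmul_eq_mul]
  push_cast
  have e0 : (0:ℝ) ≤ ε := by positivity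
  have n0 : (0:ℝ) ≤ n := by positivity
  have : (n:ℝ)+1 ≤ 2*(n:ℝ)+ε+1 := by linarith
  calc ((n:ℝ)+1) * _ ≤ (2*(n:ℝ)+ε+1) * (2 * (2*(n:ℝ)+ε+1) * (2 * (2*(n:ℝ)+ε+1))) := by gcongr
    _ = _ := by ring

abbrev Dsc : Type := Metric.ball (0:ℂ) 1

instance fact01 : Fact ((0:ℝ) < 1) := ⟨one_pos⟩

lemma circ_norm (θ : AddCircle (1:ℝ)) (n : ℤ) : ‖(fourier n θ : ℂ)‖ = 1 := by
  rw [fourier_apply]; exact Circle.norm_coe _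

/-- polar map -/
def polT (p : ℝ × AddCircle (1:ℝ)) : Dsc :=
  ⟨if p.1 ∈ Set.Ioo (0:ℝ) 1 then (p.1:ℂ) * fourier 1 p.2 else 0, by
    split_ifs with h
    · rw [mem_ball_zero_iff, norm_mul, circ_norm, mul_one, Complex.norm_real, Real.norm_eq_abs, abs_of_pos h.1]
      exact h.2
    · simp⟩

lemma polT_meas : Measurable polT := by
  apply Measurable.subtype_mk
  apply Measurable.ite
  · exact measurable_fst measurableSet_Ioo
  · apply Measurable.mul
    · exact Complex.measurable_ofReal.comp measurable_fst
    · exact (fourier 1).continuous.measurable.comp measurable_snd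
  · exact measurable_const

lemma polT_val {p : ℝ × AddCircle (1:ℝ)} (h : p.1 ∈ Set.Ioo (0:ℝ) 1) :
    (polT p : ℂ) = (p.1:ℂ) * fourier 1 p.2 := by
  simp only [polT, if_pos h]

def Lam0 : Measure (ℝ × AddCircle (1:ℝ)) :=
  ((volume : Measure ℝ).prod AddCircle.haarAddCircle).restrict (Set.Ioo (0:ℝ) 1 ×ˢ Set.univ)

def Lam : Measure Dsc := Lam0.map polT

instance : IsFiniteMeasure Lam0 := by
  refine ⟨?_⟩
  rw [Lam0, Measure.restrict_apply_univ, Measure.prod_prod]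
  simp

instance : IsFiniteMeasure Lam := by
  unfold Lam; infer_instance

lemma fourier_pow (θ : AddCircle (1:ℝ)) (n : ℕ) : (fourier 1 θ : ℂ)^n = fourier (n:ℤ) θ := by
  induction n with
  | zero => simp
  | succ n ih => rw [pow_succ, ih]; push_cast; rw [fourier_add]

lemma integral_fourier (n : ℤ) : ∫ θ : AddCircle (1:ℝ), (fourier n θ : ℂ) ∂AddCircle.haarAddCircle = if n = 0 then 1 else 0 := by
  split_ifs with h
  · subst h; simp
  · exact integral_eq_zero_of_add_right_eq_neg (μ := AddCircle.haarAddCircle)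
      (fourier_add_half_inv_index h one_pos)

lemma moment (m n : ℕ) (w : ℝ → ℂ) (hw : Measurable w) :
    ∫ s, (starRingEnd ℂ (s:ℂ))^m * (s:ℂ)^n * w ‖(s:ℂ)‖ ∂Lam =
      if m = n then ∫ r in Set.Ioo (0:ℝ) 1, (r:ℂ)^(2*n) * w r else 0 := by
  unfold Lam
  rw [integral_map polT_meas.aemeasurable]
  swap
  · apply Measurable.aestronglyMeasurable
    have : Measurable (fun s : Dsc => (s:ℂ)) := measurable_subtype_coe
    have h2 : Measurable (fun s : Dsc => starRingEnd ℂ (s:ℂ)) := Complex.continuous_conj.measurable.comp this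
    exact ((h2.pow_const m).mul (this.pow_const n)).mul (hw.comp this.norm)
  unfold Lam0
  rw [setIntegral_congr_fun (g := fun p => ((p.1:ℂ)^(m+n) * w p.1) * fourier ((n:ℤ) - m) p.2)]
  · rw [setIntegral_prod_mul (fun r : ℝ => (r:ℂ)^(m+n) * w r) (fun θ : AddCircle (1:ℝ) => (fourier ((n:ℤ) - m) θ : ℂ)),
      Measure.restrict_univ, integral_fourier]
    by_cases h : m = n
    · subst h; simp [two_mul]
    · rw [if_neg, if_neg h, mul_zero]
      omega
  · exact measurableSet_Ioo.prod MeasurableSet.univ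
  · intro p hp
    have hp1 : p.1 ∈ Set.Ioo (0:ℝ) 1 := hp.1
    simp only
    rw [polT_val hp1, norm_mul, circ_norm, mul_one, Complex.norm_real, Real.norm_eq_abs, abs_of_pos hp1.1]
    rw [map_mul, Complex.conj_ofReal, mul_pow, mul_pow, ← map_pow, fourier_pow, fourier_pow, ← fourier_neg, sub_eq_add_neg, fourier_add, pow_add]
    ring

lemma int_pow (k : ℕ) : ∫ r in Set.Ioo (0:ℝ) 1, (r:ℂ)^k = 1/((k:ℂ)+1) := by
  rw [← integral_Ioc_eq_integral_Ioo, ← intervalIntegral.integral_of_le zero_le_one]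
  have : ∀ r : ℝ, (r:ℂ)^k = ((r^k : ℝ) : ℂ) := by intro r; push_cast; rfl
  simp_rw [this]
  rw [intervalIntegral.integral_ofReal, integral_pow]
  push_cast; simp

lemma int_pow_one_sub (k : ℕ) : ∫ r in Set.Ioo (0:ℝ) 1, (r:ℂ)^k * (1 - (r:ℂ)) = 1/(((k:ℂ)+1) * ((k:ℂ)+2)) := by
  have hi : ∀ j : ℕ, IntegrableOn (fun r : ℝ => (r:ℂ)^j) (Set.Ioo (0:ℝ) 1) := by
    intro j
    apply (Continuous.integrableOn_Icc (a := (0:ℝ)) (b := 1) (by fun_prop)).mono_set Set.Ioo_subset_Icc_self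
  have : ∀ r : ℝ, (r:ℂ)^k * (1 - (r:ℂ)) = (r:ℂ)^k - (r:ℂ)^(k+1) := by intro r; ring
  simp_rw [this]
  rw [integral_sub (hi k) (hi (k+1)), int_pow, int_pow]
  have h1 : (k:ℂ)+1 ≠ 0 := by exact_mod_cast (Nat.succ_ne_zero k)
  have h2 : (k:ℂ)+2 ≠ 0 := by exact_mod_cast (Nat.succ_ne_zero (k+1))
  have h3 : (k:ℂ)+1+1 ≠ 0 := by exact_mod_cast (Nat.succ_ne_zero (k+1))
  push_cast
  field_simp
  ring

lemma dsc_lt (s : Dsc) : ‖(s:ℂ)‖ < 1 := mem_ball_zero_iff.1 s.2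

lemma coe_meas : Measurable (fun s : Dsc => (s:ℂ)) := measurable_subtype_coe
lemma conj_meas : Measurable (fun s : Dsc => starRingEnd ℂ (s:ℂ)) :=
  Complex.continuous_conj.measurable.comp coe_meas

lemma bounded_integrable {f : Dsc → ℂ} (hf : Measurable f) (C : ℝ) (h : ∀ s, ‖f s‖ ≤ C) : Integrable f Lam :=
  Integrable.of_bound hf.aestronglyMeasurable C (Filter.Eventually.of_forall h)

lemma fin_L2_aux (ε N : ℕ) (c : ℕ → ℂ) :
    ∫ s : Dsc, (∑ i ∈ Finset.range N, c i * (starRingEnd ℂ (s:ℂ))^i) *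
      (starRingEnd ℂ (∑ i ∈ Finset.range N, c i * (starRingEnd ℂ (s:ℂ))^i)) * ((‖(s:ℂ)‖ : ℂ))^ε ∂Lam =
    ∑ i ∈ Finset.range N, c i * starRingEnd ℂ (c i) * (1 / ((2 * i + ε + 1 : ℕ) : ℂ)) := by
  have e : ∀ s : Dsc, (∑ i ∈ Finset.range N, c i * (starRingEnd ℂ (s:ℂ))^i) *
      (starRingEnd ℂ (∑ i ∈ Finset.range N, c i * (starRingEnd ℂ (s:ℂ))^i)) * ((‖(s:ℂ)‖ : ℂ))^ε =
      ∑ i ∈ Finset.range N, ∑ j ∈ Finset.range N, (c i * starRingEnd ℂ (c j)) *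
        ((starRingEnd ℂ (s:ℂ))^i * (s:ℂ)^j * ((‖(s:ℂ)‖ : ℂ))^ε) := by
    intro s
    rw [map_sum, Finset.sum_mul_sum, Finset.sum_mul]
    apply Finset.sum_congr rfl; intro i _
    rw [Finset.sum_mul]
    apply Finset.sum_congr rfl; intro j _
    rw [map_mul, map_pow, Complex.conj_conj]; ring
  simp_rw [e]
  have hint : ∀ i j : ℕ, Integrable (fun s : Dsc => (c i * starRingEnd ℂ (c j)) *
        ((starRingEnd ℂ (s:ℂ))^i * (s:ℂ)^j * ((‖(s:ℂ)‖ : ℂ))^ε)) Lam := by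
    intro i j
    apply Integrable.const_mul
    apply bounded_integrable _ 1
    · intro s
      have h := (dsc_lt s).le
      simp only [norm_mul, norm_pow, RCLike.norm_conj, Complex.norm_real, norm_norm]
      have h1 := pow_le_one₀ (n := i) (norm_nonneg _) h
      have h2 := pow_le_one₀ (n := j) (norm_nonneg _) h
      have h3 := pow_le_one₀ (n := ε) (norm_nonneg _) h
      exact mul_le_one₀ (mul_le_one₀ h1 (by positivity) h2) (by positivity) h3
    · exact ((conj_meas.pow_const i).mul (coe_meas.pow_const j)).mul
        ((Complex.measurable_ofReal.comp coe_meas.norm).pow_const ε)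
  rw [integral_finsetSum _ (fun i _ => integrable_finsetSum _ (fun j _ => hint i j))]
  apply Finset.sum_congr rfl; intro i hi
  rw [integral_finsetSum _ (fun j _ => hint i j)]
  rw [Finset.sum_eq_single_of_mem i hi]
  · rw [integral_const_mul, moment i i (fun r => (r:ℂ)^ε) (by fun_prop), if_pos rfl]
    simp_rw [← pow_add]
    rw [int_pow]
    push_cast; rfl
  · intro j _ hj
    rw [integral_const_mul, moment i j (fun r => (r:ℂ)^ε) (by fun_prop), if_neg (Ne.symm hj), mul_zero]

lemma fin_L2 (ε N : ℕ) (c : ℕ → ℂ) :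
    ∫⁻ s : Dsc, ‖∑ i ∈ Finset.range N, c i * (starRingEnd ℂ (s:ℂ))^i‖ₑ^2 * ‖(s:ℂ)‖ₑ^ε ∂Lam =
    ENNReal.ofReal (∑ i ∈ Finset.range N, ‖c i‖^2 / (2 * (i:ℝ) + ε + 1)) := by
  have hm : Measurable (fun s : Dsc => ∑ i ∈ Finset.range N, c i * (starRingEnd ℂ (s:ℂ))^i) :=
    Finset.measurable_fun_sum _ fun i _ => (conj_meas.pow_const i).const_mul _
  have h1 : ∀ s : Dsc, ‖∑ i ∈ Finset.range N, c i * (starRingEnd ℂ (s:ℂ))^i‖ₑ^2 * ‖(s:ℂ)‖ₑ^ε =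
      ENNReal.ofReal (‖∑ i ∈ Finset.range N, c i * (starRingEnd ℂ (s:ℂ))^i‖^2 * ‖(s:ℂ)‖^ε) := by
    intro s
    rw [ENNReal.ofReal_mul (by positivity), ENNReal.ofReal_pow (norm_nonneg _), ENNReal.ofReal_pow (norm_nonneg _), ofReal_norm, ofReal_norm]
  simp_rw [h1]
  rw [← ofReal_integral_eq_lintegral_ofReal]
  · congr 1
    have h2 := fin_L2_aux ε N c
    have h3 : ∀ s : Dsc, (∑ i ∈ Finset.range N, c i * (starRingEnd ℂ (s:ℂ))^i) *
      (starRingEnd ℂ (∑ i ∈ Finset.range N, c i * (starRingEnd ℂ (s:ℂ))^i)) * ((‖(s:ℂ)‖ : ℂ))^ε =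
      ((‖∑ i ∈ Finset.range N, c i * (starRingEnd ℂ (s:ℂ))^i‖^2 * ‖(s:ℂ)‖^ε : ℝ) : ℂ) := by
      intro s
      rw [Complex.mul_conj, Complex.normSq_eq_norm_sq]; push_cast; rfl
    simp_rw [h3] at h2
    rw [integral_complex_ofReal] at h2
    apply Complex.ofReal_injective
    rw [h2]
    push_cast
    apply Finset.sum_congr rfl; intro i _
    rw [Complex.mul_conj, Complex.normSq_eq_norm_sq]
    push_cast; ring
  · refine Integrable.of_bound (C := (∑ i ∈ Finset.range N, ‖c i‖)^2) ?_ ?_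
    · exact ((hm.norm.pow_const 2).mul (coe_meas.norm.pow_const ε)).aestronglyMeasurable
    · refine Filter.Eventually.of_forall fun s => ?_
      have h := (dsc_lt s).le
      rw [Real.norm_of_nonneg (by positivity)]
      have h4 : ‖∑ i ∈ Finset.range N, c i * (starRingEnd ℂ (s:ℂ))^i‖ ≤ ∑ i ∈ Finset.range N, ‖c i‖ := by
        refine (norm_sum_le _ _).trans (Finset.sum_le_sum fun i _ => ?_)
        rw [norm_mul, norm_pow, RCLike.norm_conj]
        exact mul_le_of_le_one_right (norm_nonneg _) (pow_le_one₀ (norm_nonneg _) h)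
      have h3 := pow_le_one₀ (n := ε) (norm_nonneg _) h
      calc _ ≤ ‖∑ i ∈ Finset.range N, c i * (starRingEnd ℂ (s:ℂ))^i‖^2 * 1 := by gcongr
        _ ≤ _ := by rw [mul_one]; gcongr
  · exact Filter.Eventually.of_forall fun s => by simp only [Pi.zero_apply]; positivity

/-- power series attached to a sequence -/
def Fser (ε : ℕ) (x : ℕ → ℂ) (s : Dsc) : ℂ := ∑' i, x i * (bet (2*i+ε) : ℂ) * (starRingEnd ℂ (s:ℂ))^i

lemma poly_geom (ε k : ℕ) (C : ℝ) {r : ℝ} (h0 : 0 ≤ r) (h1 : r < 1) :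
    Summable (fun n : ℕ => C * (2*(n:ℝ)+ε+1)^k * r^n) := by
  have hb : Summable (fun n : ℕ => (|C| * (ε+3)^k) * (((n:ℝ)^k + 1) * r^n)) := by
    apply Summable.mul_left
    have a1 := summable_pow_mul_geometric_of_norm_lt_one (R := ℝ) k (r := r) (by rwa [Real.norm_of_nonneg h0])
    have a2 := summable_geometric_of_lt_one h0 h1
    exact (a1.add a2).congr fun n => by ring
  refine Summable.of_norm_bounded hb fun n => ?_
  rw [norm_mul, norm_mul, Real.norm_of_nonneg (pow_nonneg h0 n), Real.norm_eq_abs, Real.norm_of_nonneg (by positivity)]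
  have : (2*(n:ℝ)+ε+1)^k ≤ (ε+3)^k * ((n:ℝ)^k+1) := by
    rcases Nat.eq_zero_or_pos n with h | h
    · subst h
      have e1 : (2*((0:ℕ):ℝ)+ε+1)^k ≤ ((ε:ℝ)+3)^k := by
        gcongr; simp; linarith
      have e2 : ((ε:ℝ)+3)^k * 1 ≤ ((ε:ℝ)+3)^k * (((0:ℕ):ℝ)^k+1) := by
        gcongr
        have : (0:ℝ) ≤ ((0:ℕ):ℝ)^k := by positivity
        linarith
      linarith
    · have hn : (1:ℝ) ≤ n := by exact_mod_cast h
      have e1 : (2*(n:ℝ)+ε+1)^k ≤ (((ε:ℝ)+3) * n)^k := by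
        gcongr
        have : (0:ℝ) ≤ ε := by positivity
        nlinarith
      rw [mul_pow] at e1
      have : (0:ℝ) ≤ ((ε:ℝ)+3)^k := by positivity
      nlinarith
  calc _ ≤ |C| * ((ε+3)^k * ((n:ℝ)^k+1)) * r^n := by gcongr
    _ = _ := by ring

lemma Fser_summable (ε : ℕ) (x : ℕ → ℂ) (B : ℝ) (hx : ∀ i, ‖x i‖ ≤ B) (s : Dsc) :
    Summable (fun i => ‖x i * (bet (2*i+ε) : ℂ) * (starRingEnd ℂ (s:ℂ))^i‖) := by
  have hB : 0 ≤ B := (norm_nonneg _).trans (hx 0)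
  refine Summable.of_nonneg_of_le (fun _ => norm_nonneg _) (fun i => ?_)
    (poly_geom ε 1 (B * 2) (norm_nonneg (s:ℂ)) (dsc_lt s))
  rw [norm_mul, norm_mul, norm_pow, RCLike.norm_conj, Complex.norm_real, Real.norm_of_nonneg (bet_pos _).le]
  have := bet_le (2*i+ε)
  push_cast at this
  have h2 := (bet_pos (2*i+ε)).le
  calc _ ≤ B * (2 * (2*(i:ℝ)+ε+1)) * ‖(s:ℂ)‖^i := by gcongr; exact hx i
    _ = _ := by ring

lemma Fser_tendsto (ε : ℕ) (x : ℕ → ℂ) (B : ℝ) (hx : ∀ i, ‖x i‖ ≤ B) (s : Dsc) :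
    Tendsto (fun N => ∑ i ∈ Finset.range N, x i * (bet (2*i+ε) : ℂ) * (starRingEnd ℂ (s:ℂ))^i) atTop (nhds (Fser ε x s)) :=
  (Fser_summable ε x B hx s).of_norm.hasSum.tendsto_sum_nat

lemma Fser_meas (ε : ℕ) (x : ℕ → ℂ) (B : ℝ) (hx : ∀ i, ‖x i‖ ≤ B) : Measurable (Fser ε x) := by
  apply measurable_of_tendsto_metrizable (f := fun N (s:Dsc) => ∑ i ∈ Finset.range N, x i * (bet (2*i+ε) : ℂ) * (starRingEnd ℂ (s:ℂ))^i)
  · intro N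
    exact Finset.measurable_fun_sum _ fun i _ => (conj_meas.pow_const i).const_mul _
  · rw [tendsto_pi_nhds]
    exact fun s => Fser_tendsto ε x B hx s

lemma Fser_L2 (ε : ℕ) (x : ℕ → ℂ) (B : ℝ) (hx : ∀ N, ∑ i ∈ Finset.range N, ‖x i‖^2 ≤ B^2) (hB : 0 ≤ B) :
    ∫⁻ s, ‖Fser ε x s‖ₑ^2 * ‖(s:ℂ)‖ₑ^ε ∂Lam ≤ ENNReal.ofReal (4 / Real.pi * B^2) := by
  have hx' : ∀ i, ‖x i‖ ≤ B := by
    intro i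
    have h1 := hx (i+1)
    rw [Finset.sum_range_succ] at h1
    have : 0 ≤ ∑ i ∈ Finset.range i, ‖x i‖^2 := by positivity
    exact abs_le_of_sq_le_sq' (by linarith) hB |>.2
  have hpt : ∀ s : Dsc, ‖Fser ε x s‖ₑ^2 * ‖(s:ℂ)‖ₑ^ε = liminf (fun N =>
      ‖∑ i ∈ Finset.range N, x i * (bet (2*i+ε) : ℂ) * (starRingEnd ℂ (s:ℂ))^i‖ₑ^2 * ‖(s:ℂ)‖ₑ^ε) atTop := by
    intro s
    symm
    apply Tendsto.liminf_eq
    apply ENNReal.Tendsto.mul_const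
    · exact ((ENNReal.continuous_pow 2).tendsto _).comp ((Fser_tendsto ε x B hx' s).enorm)
    · right; exact ENNReal.pow_ne_top enorm_ne_top
  simp_rw [hpt]
  refine (lintegral_liminf_le ?_).trans ?_
  · intro N
    have hm : Measurable (fun s : Dsc => ∑ i ∈ Finset.range N, x i * (bet (2*i+ε) : ℂ) * (starRingEnd ℂ (s:ℂ))^i) :=
      Finset.measurable_fun_sum _ fun i _ => (conj_meas.pow_const i).const_mul _
    exact (hm.enorm.pow_const 2).mul (coe_meas.enorm.pow_const ε)
  · apply liminf_le_of_frequently_le'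
    apply Filter.Frequently.of_forall
    intro N
    rw [fin_L2 ε N (fun i => x i * (bet (2*i+ε) : ℂ))]
    apply ENNReal.ofReal_le_ofReal
    calc _ ≤ ∑ i ∈ Finset.range N, 4 / Real.pi * ‖x i‖^2 := by
          apply Finset.sum_le_sum; intro i _
          have := bet_sq_le (2*i+ε)
          push_cast at this
          rw [norm_mul, Complex.norm_real, Real.norm_of_nonneg (bet_pos _).le, mul_pow, mul_div_assoc, mul_comm]
          gcongr
      _ ≤ _ := by
          rw [← Finset.mul_sum]
          have := hx N
          have := Real.pi_pos
          gcongr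

lemma holder2 (ε : ℕ) (F G : Dsc → ℂ) (hF : Measurable F) (hG : Measurable G) (A B : ℝ) (hA : 0 ≤ A) (hB : 0 ≤ B)
    (C : ℝ) (hC : 0 ≤ C)
    (h1 : ∫⁻ s, ‖F s‖ₑ^2 * ‖(s:ℂ)‖ₑ^ε ∂Lam ≤ ENNReal.ofReal (C * A^2))
    (h2 : ∫⁻ s, ‖G s‖ₑ^2 * ‖(s:ℂ)‖ₑ^ε ∂Lam ≤ ENNReal.ofReal (C * B^2)) :
    ∫⁻ s, ‖F s * G s‖ₑ * ‖(s:ℂ)‖ₑ^ε ∂Lam ≤ ENNReal.ofReal (C * (A * B)) := by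
  have key := ENNReal.lintegral_mul_le_Lp_mul_Lq Lam Real.HolderConjugate.two_two
    (f := fun s => ‖F s‖ₑ * (‖(s:ℂ)‖ₑ^ε)^(1/2:ℝ)) (g := fun s => ‖G s‖ₑ * (‖(s:ℂ)‖ₑ^ε)^(1/2:ℝ))
    (hF.enorm.mul ((coe_meas.enorm.pow_const ε).pow_const _)).aemeasurable
    (hG.enorm.mul ((coe_meas.enorm.pow_const ε).pow_const _)).aemeasurable
  have e1 : ∀ (H : Dsc → ℂ) (s : Dsc), (‖H s‖ₑ * (‖(s:ℂ)‖ₑ^ε)^(1/2:ℝ))^(2:ℝ) = ‖H s‖ₑ^2 * ‖(s:ℂ)‖ₑ^ε := by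
    intro H s
    rw [ENNReal.mul_rpow_of_nonneg _ _ (by norm_num), ← ENNReal.rpow_mul]
    norm_num
  simp_rw [e1] at key
  calc _ = ∫⁻ s, ((fun s : Dsc => ‖F s‖ₑ * (‖(s:ℂ)‖ₑ^ε)^(1/2:ℝ)) * (fun s => ‖G s‖ₑ * (‖(s:ℂ)‖ₑ^ε)^(1/2:ℝ))) s ∂Lam := by
        apply lintegral_congr; intro s
        simp only [Pi.mul_apply]
        rw [mul_mul_mul_comm, ← ENNReal.rpow_add_of_nonneg _ _ (by norm_num) (by norm_num), enorm_mul]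
        norm_num
    _ ≤ _ := key
    _ ≤ (ENNReal.ofReal (C * A^2))^(1/2:ℝ) * (ENNReal.ofReal (C * B^2))^(1/2:ℝ) := by gcongr
    _ = _ := by
        rw [ENNReal.ofReal_rpow_of_nonneg (by positivity) (by norm_num), ENNReal.ofReal_rpow_of_nonneg (by positivity) (by norm_num),
          ← ENNReal.ofReal_mul (by positivity), ← Real.sqrt_eq_rpow, ← Real.sqrt_eq_rpow, ← Real.sqrt_mul (by positivity)]
        congr 1
        rw [show C * A^2 * (C * B^2) = (C * (A*B))^2 by ring, Real.sqrt_sq (by positivity)]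

lemma ell2_sum_le (x : ell2) (N : ℕ) : ∑ i ∈ Finset.range N, ‖(x : ℕ → ℂ) i‖^2 ≤ ‖x‖^2 := by
  have := lp.sum_rpow_le_norm_rpow (p := 2) (by norm_num) x (Finset.range N)
  simpa using this

lemma ell2_le (x : ell2) (i : ℕ) : ‖(x : ℕ → ℂ) i‖ ≤ ‖x‖ :=
  lp.norm_apply_le_norm (by norm_num) x i

lemma trace_pt (ε : ℕ) (a : ℕ → ℂ) (x y : ℕ → ell2) (hs : Summable fun k => ‖x k‖ * ‖y k‖)
    (hr : ∀ i j, a (i+j) = ∑' k, (x k : ℕ → ℂ) i * (starRingEnd ℂ) ((y k : ℕ → ℂ) j)) (s : Dsc) :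
    ∑' n, a n * (gam ε n : ℂ) * (starRingEnd ℂ (s:ℂ))^n =
      ∑' k, Fser ε (x k) s * Fser ε (fun j => starRingEnd ℂ ((y k : ℕ → ℂ) j)) s := by
  set z := starRingEnd ℂ (s:ℂ) with hz
  have hzn : ‖z‖ = ‖(s:ℂ)‖ := RCLike.norm_conj _
  -- Cauchy product
  have h1 : ∀ k, Fser ε (x k) s * Fser ε (fun j => starRingEnd ℂ ((y k : ℕ → ℂ) j)) s =
      ∑' n, ∑ p ∈ Finset.HasAntidiagonal.antidiagonal n,
        ((x k : ℕ → ℂ) p.1 * starRingEnd ℂ ((y k : ℕ → ℂ) p.2)) * ((bet (2*p.1+ε) * bet (2*p.2+ε) : ℝ) : ℂ) * z^n := by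
    intro k
    unfold Fser
    rw [tsum_mul_tsum_eq_tsum_sum_antidiagonal_of_summable_norm
      (Fser_summable ε (x k) ‖x k‖ (ell2_le _) s)
      (Fser_summable ε _ ‖y k‖ (fun i => by rw [RCLike.norm_conj]; exact ell2_le _ i) s)]
    congr 1; ext n
    apply Finset.sum_congr rfl
    intro p hp
    rw [← Finset.HasAntidiagonal.mem_antidiagonal.1 hp, pow_add]
    push_cast; ring
  simp_rw [h1]
  have hsum1 : ∀ i j, Summable (fun k => (x k : ℕ → ℂ) i * (starRingEnd ℂ) ((y k : ℕ → ℂ) j)) := by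
    intro i j
    refine Summable.of_norm_bounded hs fun k => ?_
    rw [norm_mul, RCLike.norm_conj]
    gcongr
    · exact ell2_le _ _
    · exact ell2_le _ _
  have hg : Summable (fun n => gam ε n * ‖z‖^n) := by
    refine Summable.of_nonneg_of_le (fun n => mul_nonneg (gam_nonneg _ _) (by positivity)) (fun n => ?_)
      (poly_geom ε 3 4 (norm_nonneg z) (by rw [hzn]; exact dsc_lt s))
    have := gam_le ε n
    gcongr
  rw [Summable.tsum_comm]
  · congr 1; ext n
    rw [Summable.tsum_finsetSum]
    · have : ∀ p ∈ Finset.HasAntidiagonal.antidiagonal n, ∑' k, ((x k : ℕ → ℂ) p.1 * starRingEnd ℂ ((y k : ℕ → ℂ) p.2)) * ((bet (2*p.1+ε) * bet (2*p.2+ε) : ℝ) : ℂ) * z^n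
          = a n * ((bet (2*p.1+ε) * bet (2*p.2+ε) : ℝ) : ℂ) * z^n := by
        intro p hp
        rw [tsum_mul_right, tsum_mul_right, ← hr, Finset.HasAntidiagonal.mem_antidiagonal.1 hp]
      rw [Finset.sum_congr rfl this, gam, ← Finset.sum_mul, ← Finset.mul_sum]
      push_cast; rfl
    · intro p _
      exact ((hsum1 p.1 p.2).mul_right _).mul_right _
  · have hb : Summable (fun q : ℕ × ℕ => (‖x q.1‖ * ‖y q.1‖) * (gam ε q.2 * ‖z‖^q.2)) :=
      hs.mul_of_nonneg hg (fun k => by positivity) (fun n => mul_nonneg (gam_nonneg _ _) (by positivity))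
    refine Summable.of_norm_bounded hb.prod_symm fun q => ?_
    simp only [Function.uncurry, Prod.fst_swap, Prod.snd_swap]
    refine (norm_sum_le _ _).trans ?_
    rw [gam, Finset.sum_mul, Finset.mul_sum]
    apply Finset.sum_le_sum
    intro p _
    rw [norm_mul, norm_mul, norm_mul, norm_pow, RCLike.norm_conj, Complex.norm_real, Real.norm_of_nonneg (mul_nonneg (bet_pos _).le (bet_pos _).le)]
    rw [mul_assoc]
    have hh := mul_nonneg (bet_pos (2*p.1+ε)).le (bet_pos (2*p.2+ε)).le
    gcongr
    · exact ell2_le _ _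
    · exact ell2_le _ _

lemma trace_bd (ε : ℕ) (a : ℕ → ℂ) (x y : ℕ → ell2) (hs : Summable fun k => ‖x k‖ * ‖y k‖)
    (hr : ∀ i j, a (i+j) = ∑' k, (x k : ℕ → ℂ) i * (starRingEnd ℂ) ((y k : ℕ → ℂ) j)) :
    ∫⁻ s : Dsc, ‖∑' n, a n * (gam ε n : ℂ) * (starRingEnd ℂ (s:ℂ))^n‖ₑ * ‖(s:ℂ)‖ₑ^ε ∂Lam ≤
      ENNReal.ofReal (4 / Real.pi * ∑' k, ‖x k‖ * ‖y k‖) := by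
  simp_rw [trace_pt ε a x y hs hr]
  have hpi := Real.pi_pos
  have my : ∀ k, Measurable (Fser ε (fun j => starRingEnd ℂ ((y k : ℕ → ℂ) j))) := fun k =>
    Fser_meas ε _ ‖y k‖ (fun i => by rw [RCLike.norm_conj]; exact ell2_le _ i)
  have mx : ∀ k, Measurable (Fser ε (x k)) := fun k => Fser_meas ε _ ‖x k‖ (ell2_le _)
  calc _ ≤ ∫⁻ s : Dsc, ∑' k, ‖Fser ε (x k) s * Fser ε (fun j => starRingEnd ℂ ((y k : ℕ → ℂ) j)) s‖ₑ * ‖(s:ℂ)‖ₑ^ε ∂Lam := by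
        apply lintegral_mono
        intro s
        simp only
        rw [ENNReal.tsum_mul_right]
        gcongr
        exact enorm_tsum_le_tsum_enorm
    _ = ∑' k, ∫⁻ s : Dsc, ‖Fser ε (x k) s * Fser ε (fun j => starRingEnd ℂ ((y k : ℕ → ℂ) j)) s‖ₑ * ‖(s:ℂ)‖ₑ^ε ∂Lam := by
        apply lintegral_tsum
        intro k
        exact (((mx k).mul (my k)).enorm.mul (coe_meas.enorm.pow_const ε)).aemeasurable
    _ ≤ ∑' k, ENNReal.ofReal (4 / Real.pi * (‖x k‖ * ‖y k‖)) := by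
        apply ENNReal.tsum_le_tsum
        intro k
        apply holder2 ε _ _ (mx k) (my k) _ _ (norm_nonneg _) (norm_nonneg _) _ (by positivity)
        · exact Fser_L2 ε _ _ (ell2_sum_le _) (norm_nonneg _)
        · apply Fser_L2 ε _ _ _ (norm_nonneg _)
          intro N
          simp only [RCLike.norm_conj]
          exact ell2_sum_le _ N
    _ = _ := by
        rw [← ENNReal.ofReal_tsum_of_nonneg (fun k => by positivity) (hs.mul_left _), tsum_mul_left]

lemma diag_summable (a : ℕ → ℂ) (x y : ℕ → ell2) (hs : Summable fun k => ‖x k‖ * ‖y k‖)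
    (hr : ∀ i j, a (i+j) = ∑' k, (x k : ℕ → ℂ) i * (starRingEnd ℂ) ((y k : ℕ → ℂ) j)) :
    Summable (fun n => ‖a (n+n)‖) := by
  apply summable_of_sum_range_le (c := ∑' k, ‖x k‖ * ‖y k‖) (fun _ => norm_nonneg _)
  intro N
  have hb : ∀ n, Summable (fun k => ‖(x k : ℕ → ℂ) n‖ * ‖(y k : ℕ → ℂ) n‖) := by
    intro n
    refine Summable.of_nonneg_of_le (fun k => by positivity) (fun k => ?_) hs
    gcongr
    · exact ell2_le _ _
    · exact ell2_le _ _
  calc _ ≤ ∑ n ∈ Finset.range N, ∑' k, ‖(x k : ℕ → ℂ) n‖ * ‖(y k : ℕ → ℂ) n‖ := by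
        apply Finset.sum_le_sum; intro n _
        rw [hr]
        have h := hb n
        have : (fun k => ‖(x k : ℕ → ℂ) n * (starRingEnd ℂ) ((y k : ℕ → ℂ) n)‖) = (fun k => ‖(x k : ℕ → ℂ) n‖ * ‖(y k : ℕ → ℂ) n‖) := by
          ext k; rw [norm_mul, RCLike.norm_conj]
        rw [← this]
        apply norm_tsum_le_tsum_norm
        rw [this]; exact h
    _ = ∑' k, ∑ n ∈ Finset.range N, ‖(x k : ℕ → ℂ) n‖ * ‖(y k : ℕ → ℂ) n‖ :=
        (Summable.tsum_finsetSum fun n _ => hb n).symm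
    _ ≤ _ := by
        have hle : ∀ k, ∑ n ∈ Finset.range N, ‖(x k : ℕ → ℂ) n‖ * ‖(y k : ℕ → ℂ) n‖ ≤ ‖x k‖ * ‖y k‖ := by
          intro k
          have c := Finset.sum_mul_sq_le_sq_mul_sq (Finset.range N) (fun n => ‖(x k : ℕ → ℂ) n‖) (fun n => ‖(y k : ℕ → ℂ) n‖)
          have c1 := ell2_sum_le (x k) N
          have c2 := ell2_sum_le (y k) N
          refine abs_le_of_sq_le_sq' ?_ (by positivity) |>.2
          rw [mul_pow]
          refine c.trans ?_
          gcongr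
        exact Summable.tsum_le_tsum hle (Summable.of_nonneg_of_le (fun k => by positivity) hle hs) hs

lemma coef_summable (a : ℕ → ℂ) (h0 : Summable (fun n => ‖a (n+n)‖)) (h1 : Summable (fun n => ‖a (n+n+1)‖)) :
    Summable (fun n => ‖a n‖) := by
  have e' : Summable (fun k => ‖a (2*k)‖) := by simp_rw [two_mul]; exact h0
  have o' : Summable (fun k => ‖a (2*k+1)‖) := by simp_rw [two_mul]; exact h1
  exact (HasSum.even_add_odd (f := fun n => ‖a n‖) e'.hasSum o'.hasSum).summable
/-- the density series -/
def gser (a : ℕ → ℂ) (s : Dsc) : ℂ := ∑' n : ℕ, a n * (((2*(n:ℝ)+1)*((n:ℝ)+1) : ℝ) : ℂ) * (starRingEnd ℂ (s:ℂ))^n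

lemma gser_summable (a : ℕ → ℂ) (B : ℝ) (ha : ∀ n, ‖a n‖ ≤ B) (s : Dsc) :
    Summable (fun n : ℕ => a n * (((2*(n:ℝ)+1)*((n:ℝ)+1) : ℝ) : ℂ) * (starRingEnd ℂ (s:ℂ))^n) := by
  have hB : 0 ≤ B := (norm_nonneg _).trans (ha 0)
  refine Summable.of_norm_bounded (poly_geom 0 2 B (norm_nonneg (s:ℂ)) (dsc_lt s)) fun n => ?_
  rw [norm_mul, norm_mul, norm_pow, RCLike.norm_conj, Complex.norm_real, Real.norm_of_nonneg (by positivity)]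
  gcongr
  · exact ha n
  · have : (0:ℝ) ≤ n := by positivity
    push_cast; nlinarith

lemma gam_series_summable (ε : ℕ) (a : ℕ → ℂ) (B : ℝ) (ha : ∀ n, ‖a n‖ ≤ B) (s : Dsc) :
    Summable (fun n : ℕ => a n * (gam ε n : ℂ) * (starRingEnd ℂ (s:ℂ))^n) := by
  have hB : 0 ≤ B := (norm_nonneg _).trans (ha 0)
  refine Summable.of_norm_bounded (poly_geom ε 3 (B*4) (norm_nonneg (s:ℂ)) (dsc_lt s)) fun n => ?_
  rw [norm_mul, norm_mul, norm_pow, RCLike.norm_conj, Complex.norm_real, Real.norm_of_nonneg (gam_nonneg _ _)]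
  have h := gam_le ε n
  have h0 := gam_nonneg ε n
  calc _ ≤ B * (4 * (2*(n:ℝ)+ε+1)^3) * ‖(s:ℂ)‖^n := by gcongr; exact ha n
    _ = _ := by ring

lemma gser_meas (a : ℕ → ℂ) (B : ℝ) (ha : ∀ n, ‖a n‖ ≤ B) : Measurable (gser a) := by
  apply measurable_of_tendsto_metrizable (f := fun N (s:Dsc) => ∑ n ∈ Finset.range N, a n * (((2*(n:ℝ)+1)*((n:ℝ)+1) : ℝ) : ℂ) * (starRingEnd ℂ (s:ℂ))^n)
  · intro N
    exact Finset.measurable_fun_sum _ fun i _ => (conj_meas.pow_const i).const_mul _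
  · rw [tendsto_pi_nhds]
    exact fun s => (gser_summable a B ha s).hasSum.tendsto_sum_nat

lemma gser_split (a : ℕ → ℂ) (B : ℝ) (ha : ∀ n, ‖a n‖ ≤ B) (s : Dsc) :
    gser a s = ∑' n, a n * (gam 0 n : ℂ) * (starRingEnd ℂ (s:ℂ))^n +
      starRingEnd ℂ (s:ℂ) * ∑' n, a (n+1) * (gam 1 n : ℂ) * (starRingEnd ℂ (s:ℂ))^n := by
  have s0 := gam_series_summable 0 a B ha s
  have s1 := gam_series_summable 1 (fun n => a (n+1)) B (fun n => ha _) s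
  rw [gser, (gser_summable a B ha s).tsum_eq_zero_add, s0.tsum_eq_zero_add, ← tsum_mul_left, add_assoc,
    ← Summable.tsum_add ((summable_nat_add_iff 1).2 s0) (s1.mul_left _)]
  congr 1
  · simp [gam_zero]
  · congr 1; ext n
    have := gam_succ n
    push_cast
    have h : ((gam 0 (n+1) : ℝ) : ℂ) + ((gam 1 n : ℝ) : ℂ) = (2*((n:ℂ)+1)+1)*((n:ℂ)+1+1) := by
      rw [← Complex.ofReal_add, this]; push_cast; rfl
    rw [← h]; ring

lemma gser_bd (a : ℕ → ℂ) (B : ℝ) (ha : ∀ n, ‖a n‖ ≤ B) (x y x' y' : ℕ → ell2) (hs : Summable fun k => ‖x k‖ * ‖y k‖)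
    (hr : ∀ i j, a (i+j) = ∑' k, (x k : ℕ → ℂ) i * (starRingEnd ℂ) ((y k : ℕ → ℂ) j))
    (hs' : Summable fun k => ‖x' k‖ * ‖y' k‖)
    (hr' : ∀ i j, a (i+j+1) = ∑' k, (x' k : ℕ → ℂ) i * (starRingEnd ℂ) ((y' k : ℕ → ℂ) j)) :
    ∫⁻ s : Dsc, ‖gser a s‖ₑ ∂Lam ≤ ENNReal.ofReal (4 / Real.pi * (∑' k, ‖x k‖ * ‖y k‖ + ∑' k, ‖x' k‖ * ‖y' k‖)) := by
  have b0 := trace_bd 0 a x y hs hr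
  have b1 := trace_bd 1 (fun n => a (n+1)) x' y' hs' hr'
  have hpi := Real.pi_pos
  have m0 : Measurable (fun s : Dsc => ∑' n, a n * (gam 0 n : ℂ) * (starRingEnd ℂ (s:ℂ))^n) := by
    apply measurable_of_tendsto_metrizable (f := fun N (s:Dsc) => ∑ n ∈ Finset.range N, a n * (gam 0 n : ℂ) * (starRingEnd ℂ (s:ℂ))^n)
    · intro N
      exact Finset.measurable_fun_sum _ fun i _ => (conj_meas.pow_const i).const_mul _
    · rw [tendsto_pi_nhds]
      exact fun s => (gam_series_summable 0 a B ha s).hasSum.tendsto_sum_nat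
  rw [mul_add, ENNReal.ofReal_add (mul_nonneg (by positivity) (tsum_nonneg fun k => by positivity)) (mul_nonneg (by positivity) (tsum_nonneg fun k => by positivity))]
  refine le_trans ?_ (add_le_add b0 b1)
  simp only [pow_zero, mul_one, pow_one]
  rw [← lintegral_add_left m0.enorm]
  apply lintegral_mono
  intro s
  simp only
  rw [gser_split a B ha s]
  refine (enorm_add_le _ _).trans ?_
  gcongr
  rw [enorm_mul, mul_comm]
  gcongr
  rw [← ofReal_norm, ← ofReal_norm, RCLike.norm_conj]

lemma gser_moment (a : ℕ → ℂ) (ha : Summable (fun n => ‖a n‖)) (m : ℕ) :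
    ∫ s : Dsc, 2 * gser a s * (1 - (‖(s:ℂ)‖ : ℂ)) * (s:ℂ)^m ∂Lam = a m := by
  have e : ∀ s : Dsc, 2 * gser a s * (1 - (‖(s:ℂ)‖ : ℂ)) * (s:ℂ)^m = ∑' n : ℕ, (2 * a n * (((2*(n:ℝ)+1)*((n:ℝ)+1) : ℝ) : ℂ)) *
      ((starRingEnd ℂ (s:ℂ))^n * (s:ℂ)^m * (1 - (‖(s:ℂ)‖ : ℂ))) := by
    intro s
    rw [gser, ← tsum_mul_left, ← tsum_mul_right, ← tsum_mul_right]
    congr 1; ext n; ring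
  simp_rw [e]
  have hmeas : ∀ n, Measurable (fun s : Dsc => ((starRingEnd ℂ (s:ℂ))^n * (s:ℂ)^m * (1 - (‖(s:ℂ)‖ : ℂ)))) := by
    intro n
    exact ((conj_meas.pow_const n).mul (coe_meas.pow_const m)).mul
      (measurable_const.sub (Complex.measurable_ofReal.comp coe_meas.norm))
  have hnorm : ∀ n (s : Dsc), ‖((starRingEnd ℂ (s:ℂ))^n * (s:ℂ)^m * (1 - (‖(s:ℂ)‖ : ℂ)))‖ = ‖(s:ℂ)‖^(n+m) * (1 - ‖(s:ℂ)‖) := by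
    intro n s
    have h := (dsc_lt s).le
    have h2 : (1 - (‖(s:ℂ)‖ : ℂ)) = ((1 - ‖(s:ℂ)‖ : ℝ) : ℂ) := by push_cast; rfl
    rw [norm_mul, norm_mul, norm_pow, norm_pow, RCLike.norm_conj, h2, Complex.norm_real, Real.norm_of_nonneg (by linarith), pow_add]
  have hint : ∀ n, Integrable (fun s : Dsc => ((starRingEnd ℂ (s:ℂ))^n * (s:ℂ)^m * (1 - (‖(s:ℂ)‖ : ℂ)))) Lam := by
    intro n
    apply bounded_integrable (hmeas n) 1
    intro s
    rw [hnorm]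
    have h := (dsc_lt s).le
    have h0 := norm_nonneg (s:ℂ)
    exact mul_le_one₀ (pow_le_one₀ h0 h) (by linarith) (by linarith)
  have hin : ∀ n : ℕ, ∫ s : Dsc, ‖((starRingEnd ℂ (s:ℂ))^n * (s:ℂ)^m * (1 - (‖(s:ℂ)‖ : ℂ)))‖ ∂Lam ≤ 1/(((n:ℝ)+1)*((n:ℝ)+2)) := by
    intro n
    simp_rw [hnorm]
    have h1 : ∫ s : Dsc, ‖(s:ℂ)‖^n * (1 - ‖(s:ℂ)‖) ∂Lam = 1/(((n:ℝ)+1)*((n:ℝ)+2)) := by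
      have := moment 0 0 (fun r => (r:ℂ)^n * (1 - (r:ℂ))) (by fun_prop)
      simp only [pow_zero, one_mul, mul_zero, if_true] at this
      rw [int_pow_one_sub] at this
      apply Complex.ofReal_injective
      rw [← integral_complex_ofReal]
      push_cast
      exact this
    rw [← h1]
    apply integral_mono
    · refine ((hint n).norm).congr ?_
      exact Filter.Eventually.of_forall fun s => hnorm n s
    · have := ((bounded_integrable (f := fun s : Dsc => ((‖(s:ℂ)‖^n * (1 - ‖(s:ℂ)‖) : ℝ) : ℂ)) ?_ 1 ?_)).re
      · exact this.congr (Filter.Eventually.of_forall fun s => Complex.ofReal_re _)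
      · exact Complex.measurable_ofReal.comp ((coe_meas.norm.pow_const n).mul (measurable_const.sub coe_meas.norm))
      · intro s
        have h := (dsc_lt s).le
        have h0 := norm_nonneg (s:ℂ)
        rw [Complex.norm_real, Real.norm_of_nonneg (mul_nonneg (by positivity) (by linarith))]
        exact mul_le_one₀ (pow_le_one₀ h0 h) (by linarith) (by linarith)
    · intro s
      have h := (dsc_lt s).le
      have h0 := norm_nonneg (s:ℂ)
      exact mul_le_mul_of_nonneg_right (pow_le_pow_of_le_one h0 h (Nat.le_add_right _ _)) (by linarith)
  rw [← integral_tsum_of_summable_integral_norm]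
  · rw [tsum_eq_single m]
    · rw [integral_const_mul, moment m m (fun r => 1 - (r:ℂ)) (by fun_prop), if_pos rfl, int_pow_one_sub]
      have h1 : (2*(m:ℂ)+1) ≠ 0 := by exact_mod_cast (Nat.succ_ne_zero (2*m))
      have h2 : (2*(m:ℂ)+2) ≠ 0 := by exact_mod_cast (Nat.succ_ne_zero (2*m+1))
      push_cast
      field_simp
    · intro n hn
      rw [integral_const_mul, moment n m (fun r => 1 - (r:ℂ)) (by fun_prop), if_neg hn, mul_zero]
  · intro n
    exact (hint n).const_mul _
  · refine Summable.of_nonneg_of_le (fun n => integral_nonneg fun s => norm_nonneg _) (fun n => ?_) (ha.mul_left 4)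
    simp_rw [norm_mul (2 * a n * _)]
    rw [integral_const_mul]
    have h := hin n
    rw [norm_mul, norm_mul, Complex.norm_real, Real.norm_of_nonneg (by positivity), Complex.norm_two]
    calc _ ≤ 2 * ‖a n‖ * ((2*(n:ℝ)+1)*((n:ℝ)+1)) * (1/(((n:ℝ)+1)*((n:ℝ)+2))) := by gcongr
      _ = 2 * ‖a n‖ * ((2*(n:ℝ)+1) / ((n:ℝ)+2)) := by field_simp
      _ ≤ 2 * ‖a n‖ * 2 := by
          gcongr
          rw [div_le_iff₀ (by positivity)]; linarith
      _ = _ := by ring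
/-- If `φ ∈ 𝒞`, then there are `c ∈ ℂ` and a complex Borel measure `ν` on the
open unit disc (written in polar form `ν = f · ρ` with `ρ = |ν|` a finite Borel measure and
`‖f‖ = 1` a.e.) such that `φ(n) = c + ∫_𝔻 sⁿ dν(s)` for all `n`,
`∫_𝔻 |1−s|/(1−|s|) d|ν|(s) < ∞`, and moreover
`|c| + ∫_𝔻 |1−s|/(1−|s|) d|ν|(s) ≤ (8/π)·‖φ‖_𝒞`. -/
theorem stmt1 (φ : ℕ → ℂ) (hφ : MemC φ) :
    ∃ (c : ℂ) (ρ : Measure (Metric.ball (0:ℂ) 1)) (f : Metric.ball (0:ℂ) 1 → ℂ),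
      IsFiniteMeasure ρ ∧
      AEStronglyMeasurable f ρ ∧
      (∀ᵐ s ∂ρ, ‖f s‖ = 1) ∧
      (∀ n : ℕ, φ n = c + ∫ s, f s * (s : ℂ) ^ n ∂ρ) ∧
      Integrable (fun s : Metric.ball (0:ℂ) 1 => ‖1 - (s : ℂ)‖ / (1 - ‖(s : ℂ)‖)) ρ ∧
      ‖c‖ + ∫ s, ‖1 - (s : ℂ)‖ / (1 - ‖(s : ℂ)‖) ∂ρ ≤ (8 / Real.pi) * CNorm φ := by
  obtain ⟨⟨x, y, hs, hr⟩, ⟨x', y', hs', hr'⟩⟩ := hφ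
  set a : ℕ → ℂ := fun n => φ n - φ (n+1) with ha
  have hpi := Real.pi_pos
  have hsum : Summable (fun n => ‖a n‖) :=
    coef_summable a (diag_summable a x y hs hr) (diag_summable (fun n => a (n+1)) x' y' hs' hr')
  obtain ⟨B, hB⟩ : ∃ B, ∀ n, ‖a n‖ ≤ B :=
    ⟨∑' n, ‖a n‖, fun n => hsum.le_tsum n (fun _ _ => norm_nonneg _)⟩
  have gm := gser_meas a B hB
  have gb := gser_bd a B hB x y x' y' hs hr hs' hr'
  have gi : Integrable (gser a) Lam := ⟨gm.aestronglyMeasurable, gb.trans_lt ENNReal.ofReal_lt_top⟩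
  -- the integral of the norm
  set I : ℝ := ∫ s, ‖gser a s‖ ∂Lam with hI
  have hIle : ∀ x y x' y' : ℕ → ell2, (Summable fun k => ‖x k‖ * ‖y k‖) →
      (∀ i j, hankelH φ i j = ∑' k, (x k : ℕ → ℂ) i * (starRingEnd ℂ) ((y k : ℕ → ℂ) j)) →
      (Summable fun k => ‖x' k‖ * ‖y' k‖) →
      (∀ i j, hankelK φ i j = ∑' k, (x' k : ℕ → ℂ) i * (starRingEnd ℂ) ((y' k : ℕ → ℂ) j)) →
      I ≤ 4 / Real.pi * (∑' k, ‖x k‖ * ‖y k‖ + ∑' k, ‖x' k‖ * ‖y' k‖) := by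
    intro x y x' y' hs hr hs' hr'
    have gb := gser_bd a B hB x y x' y' hs hr hs' hr'
    rw [hI, integral_norm_eq_lintegral_enorm gm.aestronglyMeasurable]
    refine ENNReal.toReal_le_of_le_ofReal ?_ gb
    exact mul_nonneg (by positivity) (add_nonneg (tsum_nonneg fun k => by positivity) (tsum_nonneg fun k => by positivity))
  have hI2 : I ≤ 4 / Real.pi * (traceNorm (hankelH φ) + traceNorm (hankelK φ)) := by
    have key : ∀ x' y' : ℕ → ell2, (Summable fun k => ‖x' k‖ * ‖y' k‖) →
      (∀ i j, hankelK φ i j = ∑' k, (x' k : ℕ → ℂ) i * (starRingEnd ℂ) ((y' k : ℕ → ℂ) j)) →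
      I * Real.pi / 4 - ∑' k, ‖x' k‖ * ‖y' k‖ ≤ traceNorm (hankelH φ) := by
      intro x' y' hs' hr'
      apply le_csInf
      · exact ⟨_, x, y, hs, hr, rfl⟩
      · rintro c ⟨x, y, hs, hr, rfl⟩
        have := hIle x y x' y' hs hr hs' hr'
        rw [div_mul_eq_mul_div, le_div_iff₀ hpi] at this
        linarith
    have key2 : I * Real.pi / 4 - traceNorm (hankelH φ) ≤ traceNorm (hankelK φ) := by
      apply le_csInf
      · exact ⟨_, x', y', hs', hr', rfl⟩
      · rintro c ⟨x', y', hs', hr', rfl⟩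
        have := key x' y' hs' hr'
        linarith
    rw [div_mul_eq_mul_div, le_div_iff₀ hpi]
    linarith
  -- the density
  have hne : ∀ s : Dsc, (1 - (s:ℂ)) ≠ 0 := by
    intro s h
    have h1 := dsc_lt s
    rw [← sub_eq_zero.1 h] at h1
    simp at h1
  have hle1 : ∀ s : Dsc, 1 - ‖(s:ℂ)‖ ≤ ‖1 - (s:ℂ)‖ := by
    intro s
    have := norm_sub_norm_le (1:ℂ) (s:ℂ)
    simpa using this
  have hpos : ∀ s : Dsc, 0 < 1 - ‖(s:ℂ)‖ := fun s => by linarith [dsc_lt s]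
  set D : Dsc → ℂ := fun s => 2 * gser a s * (1 - (‖(s:ℂ)‖ : ℂ)) / (1 - (s:ℂ)) with hD
  have Dm : Measurable D := ((gm.const_mul 2).mul
      (measurable_const.sub (Complex.measurable_ofReal.comp coe_meas.norm))).div (measurable_const.sub coe_meas)
  have Dn : ∀ s, ‖D s‖ = 2 * ‖gser a s‖ * (1 - ‖(s:ℂ)‖) / ‖1 - (s:ℂ)‖ := by
    intro s
    have h2 : (1 - (‖(s:ℂ)‖ : ℂ)) = ((1 - ‖(s:ℂ)‖ : ℝ) : ℂ) := by push_cast; rfl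
    simp only [hD]
    rw [norm_div, norm_mul, norm_mul, Complex.norm_two, h2, Complex.norm_real, Real.norm_of_nonneg (hpos s).le]
  have DW : ∀ s, ‖D s‖ * (‖1 - (s : ℂ)‖ / (1 - ‖(s : ℂ)‖)) = 2 * ‖gser a s‖ := by
    intro s
    rw [Dn]
    have h1 := (hpos s).ne'
    have h2 : ‖1 - (s:ℂ)‖ ≠ 0 := norm_ne_zero_iff.2 (hne s)
    field_simp
  have Di : Integrable D Lam := by
    refine Integrable.mono' (gi.norm.const_mul 2) Dm.aestronglyMeasurable (Filter.Eventually.of_forall fun s => ?_)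
    rw [Dn, mul_div_assoc]
    apply mul_le_of_le_one_right (by positivity)
    rw [div_le_one (norm_pos_iff.2 (hne s))]
    exact hle1 s
  have Dpi : ∀ n : ℕ, Integrable (fun s : Dsc => D s * (s:ℂ)^n) Lam := by
    intro n
    refine Integrable.mono' Di.norm (Dm.mul (coe_meas.pow_const n)).aestronglyMeasurable (Filter.Eventually.of_forall fun s => ?_)
    rw [norm_mul, norm_pow]
    exact mul_le_of_le_one_right (norm_nonneg _) (pow_le_one₀ (norm_nonneg _) (dsc_lt s).le)
  have hstep : ∀ n : ℕ, φ n - φ (n+1) = ∫ s, D s * (s:ℂ)^n ∂Lam - ∫ s, D s * (s:ℂ)^(n+1) ∂Lam := by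
    intro n
    have h := gser_moment a hsum n
    rw [← integral_sub (Dpi n) (Dpi (n+1))]
    rw [show φ n - φ (n+1) = a n from rfl, ← h]
    apply integral_congr_ae
    refine Filter.Eventually.of_forall fun s => ?_
    have := hne s
    simp only [hD]
    field_simp
    ring
  set c : ℂ := φ 0 - ∫ s, D s * (s:ℂ)^0 ∂Lam with hc
  have hrep : ∀ n : ℕ, φ n = c + ∫ s, D s * (s:ℂ)^n ∂Lam := by
    intro n
    induction n with
    | zero => rw [hc]; ring
    | succ n ih =>
      have := hstep n
      linear_combination ih - this
  have hlim : Tendsto φ atTop (nhds c) := by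
    have h0 : Tendsto (fun n : ℕ => ∫ s, D s * (s:ℂ)^n ∂Lam) atTop (nhds (∫ s : Dsc, (0:ℂ) ∂Lam)) := by
      apply tendsto_integral_of_dominated_convergence (fun s => ‖D s‖) (fun n => (Dpi n).aestronglyMeasurable) Di.norm
      · intro n
        refine Filter.Eventually.of_forall fun s => ?_
        rw [norm_mul, norm_pow]
        exact mul_le_of_le_one_right (norm_nonneg _) (pow_le_one₀ (norm_nonneg _) (dsc_lt s).le)
      · refine Filter.Eventually.of_forall fun s => ?_
        have := (tendsto_pow_atTop_nhds_zero_of_norm_lt_one (dsc_lt s)).const_mul (D s)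
        simpa using this
    have h1 := h0.const_add c
    simp only [integral_zero, add_zero] at h1
    exact h1.congr fun n => (hrep n).symm
  have hcl : limUnder atTop φ = c := hlim.limUnder_eq
  -- polar form
  set f : Dsc → ℂ := fun s => if D s = 0 then 1 else D s / (‖D s‖ : ℂ) with hf
  have fm : Measurable f := by
    apply Measurable.ite
    · exact Dm (measurableSet_singleton 0)
    · exact measurable_const
    · exact Dm.div (Complex.measurable_ofReal.comp Dm.norm)
  have fn : ∀ s, ‖f s‖ = 1 := by
    intro s
    simp only [hf]
    split_ifs with h
    · simp
    · rw [norm_div, Complex.norm_real, norm_norm, div_self (norm_ne_zero_iff.2 h)]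
  have fD : ∀ s, (‖D s‖ : ℂ) * f s = D s := by
    intro s
    simp only [hf]
    split_ifs with h
    · simp [h]
    · have : (‖D s‖ : ℂ) ≠ 0 := by exact_mod_cast norm_ne_zero_iff.2 h
      field_simp
  have dm : Measurable (fun s => ‖D s‖₊) := Dm.nnnorm
  refine ⟨c, Lam.withDensity (fun s => (‖D s‖₊ : ENNReal)), f, ?_, fm.aestronglyMeasurable,
    Filter.Eventually.of_forall fn, ?_, ?_, ?_⟩
  · exact isFiniteMeasure_withDensity Di.2.ne
  · intro n
    rw [hrep n, integral_withDensity_eq_integral_smul dm]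
    congr 1
    apply integral_congr_ae
    refine Filter.Eventually.of_forall fun s => ?_
    simp only [NNReal.smul_def, coe_nnnorm, Complex.real_smul]
    rw [← mul_assoc, fD]
  · rw [integrable_withDensity_iff_integrable_smul dm]
    refine (gi.norm.const_mul 2).congr (Filter.Eventually.of_forall fun s => ?_)
    simp only [NNReal.smul_def, coe_nnnorm, smul_eq_mul]
    exact (DW s).symm
  · rw [integral_withDensity_eq_integral_smul dm]
    have e : ∫ s : Dsc, ‖D s‖₊ • (‖1 - (s : ℂ)‖ / (1 - ‖(s : ℂ)‖)) ∂Lam = 2 * I := by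
      rw [hI, ← integral_const_mul]
      apply integral_congr_ae
      refine Filter.Eventually.of_forall fun s => ?_
      simp only [NNReal.smul_def, coe_nnnorm, smul_eq_mul]
      exact DW s
    rw [e, CNorm, hcl, mul_add]
    have h8 : (1:ℝ) ≤ 8 / Real.pi := by
      rw [le_div_iff₀ hpi]; linarith [Real.pi_le_four]
    have h9 : ‖c‖ ≤ 8 / Real.pi * ‖c‖ := le_mul_of_one_le_left (norm_nonneg _) h8
    have h10 : 2 * I ≤ 8 / Real.pi * (traceNorm (hankelH φ) + traceNorm (hankelK φ)) := by
      calc 2 * I ≤ 2 * (4 / Real.pi * (traceNorm (hankelH φ) + traceNorm (hankelK φ))) := by gcongr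
        _ = _ := by ring
    linarith

end
end

section
/- Let ψ : ℕ → ℂ. Then ψ belongs to the class 𝒞′ if and only if there exist a complex Borel measure μ on the open unit disc 𝔻 and constants c₊, c₋ ∈ ℂ such that ψ(n) = c₊ + (−1)ⁿ c₋ + ∫_𝔻 sⁿ dμ(s) for all n ∈ ℕ and ∫_𝔻 |1−s²|/(1−|s|²) d|μ|(s) < ∞. Moreover, for ψ ∈ 𝒞′ the measure μ and the constants can be chosen so that |c₊| + |c₋| + ∫_𝔻 |1−s²|/(1−|s|²) d|μ|(s) ≤ (8/π)·‖ψ‖_{𝒞′}. -/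
open MeasureTheory Filter

noncomputable section

/-- The Hankel matrix `ĥ_φ(i,j) = φ(i+j) − φ(i+j+2)`. -/
def hankelHat (φ : ℕ → ℂ) : ℕ → ℕ → ℂ := fun i j => φ (i+j) - φ (i+j+2)

/-- The class `𝒞′`: the Hankel matrix `ĥ_φ` is of trace class. -/
def MemCp (φ : ℕ → ℂ) : Prop := IsTraceClass (hankelHat φ)

/-- For `φ ∈ 𝒞′`, the constant `c₁` in the decomposition `φ(n) = c₁ + (−1)ⁿ c₂ + ψ(n)`,
`ψ(n) → 0`: it equals `(lim φ(2n) + lim φ(2n+1))/2`. -/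
def cOne (φ : ℕ → ℂ) : ℂ :=
  (limUnder atTop (fun n => φ (2*n)) + limUnder atTop (fun n => φ (2*n+1))) / 2

/-- For `φ ∈ 𝒞′`, the constant `c₂` in the decomposition `φ(n) = c₁ + (−1)ⁿ c₂ + ψ(n)`,
`ψ(n) → 0`: it equals `(lim φ(2n) − lim φ(2n+1))/2`. -/
def cTwo (φ : ℕ → ℂ) : ℂ :=
  (limUnder atTop (fun n => φ (2*n)) - limUnder atTop (fun n => φ (2*n+1))) / 2

/-- The norm `‖φ‖_{𝒞′} = |c₁| + |c₂| + ‖ĥ_φ‖₁`. -/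
def CpNorm (φ : ℕ → ℂ) : ℝ := ‖cOne φ‖ + ‖cTwo φ‖ + traceNorm (hankelHat φ)

/-- The open unit disc as a type. -/
abbrev DD : Type := Metric.ball (0:ℂ) 1

def uu (i : ℕ) : ℝ := Real.Gamma (i + 3/2) / Real.Gamma (i + 1)

lemma uu_pos (i : ℕ) : 0 < uu i := by
  unfold uu
  exact div_pos (Real.Gamma_pos_of_pos (by positivity)) (Real.Gamma_pos_of_pos (by positivity))

lemma uu_zero : uu 0 = Real.sqrt Real.pi / 2 := by
  unfold uu
  have : (3/2:ℝ) = 1/2 + 1 := by norm_num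
  simp only [Nat.cast_zero, zero_add, Real.Gamma_one, div_one]
  rw [this, Real.Gamma_add_one (by norm_num), Real.Gamma_one_half_eq]
  ring

lemma uu_succ (i : ℕ) : ((i:ℝ) + 1) * uu (i+1) = (i + 3/2) * uu i := by
  unfold uu
  have h1 : ((i+1:ℕ):ℝ) + 3/2 = (i + 3/2) + 1 := by push_cast; ring
  have h2 : ((i+1:ℕ):ℝ) + 1 = (i + 1) + 1 := by push_cast; ring
  rw [h1, h2, Real.Gamma_add_one (by positivity), Real.Gamma_add_one (by positivity)]
  have := (Real.Gamma_pos_of_pos (show (0:ℝ) < i + 1 by positivity)).ne'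
  field_simp

lemma uu_sq_le (i : ℕ) : uu i ^ 2 ≤ i + 1 := by
  have h := Real.Gamma_mul_add_mul_le_rpow_Gamma_mul_rpow_Gamma (s := (i:ℝ)+1) (t := (i:ℝ)+2)
    (a := 1/2) (b := 1/2) (by positivity) (by positivity) (by norm_num) (by norm_num) (by norm_num)
  have e1 : (1/2:ℝ) * (i+1) + 1/2 * (i+2) = i + 3/2 := by ring
  have e2 : (i:ℝ) + 2 = (i+1) + 1 := by ring
  rw [e1, e2, Real.Gamma_add_one (s := (i:ℝ)+1) (by positivity)] at h
  have hp := Real.Gamma_pos_of_pos (show (0:ℝ) < i + 1 by positivity)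
  have hq := Real.Gamma_pos_of_pos (show (0:ℝ) < i + 3/2 by positivity)
  rw [← Real.sqrt_eq_rpow, ← Real.sqrt_eq_rpow, ← Real.sqrt_mul hp.le] at h
  unfold uu
  rw [div_pow, div_le_iff₀ (by positivity)]
  calc Real.Gamma (i+3/2) ^ 2 ≤ (√(Real.Gamma (i + 1) * ((i + 1) * Real.Gamma (i + 1)))) ^ 2 := by
        gcongr
    _ = _ := by rw [Real.sq_sqrt (by positivity)]; ring

lemma uu_le (i : ℕ) : uu i ≤ i + 1 := by
  have := uu_sq_le i
  have := uu_pos i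
  have : (0:ℝ) ≤ i := by positivity
  nlinarith

lemma uu_conv (n : ℕ) :
    ∑ p ∈ Finset.HasAntidiagonal.antidiagonal n, uu p.1 * uu p.2 = Real.pi / 8 * ((n+1) * (n+2)) := by
  induction n with
  | zero =>
    simp [uu_zero]
    have := Real.mul_self_sqrt Real.pi_pos.le
    linarith
  | succ n ih =>
    have hs : ∑ p ∈ Finset.HasAntidiagonal.antidiagonal (n+1), (p.1:ℝ) * (uu p.1 * uu p.2)
        = ∑ p ∈ Finset.HasAntidiagonal.antidiagonal (n+1), (p.2:ℝ) * (uu p.1 * uu p.2) := by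
      rw [← Finset.Nat.sum_antidiagonal_swap]
      apply Finset.sum_congr rfl
      intro p _
      simp; left; ring
    have h1 : ((n:ℝ)+1) * ∑ p ∈ Finset.HasAntidiagonal.antidiagonal (n+1), uu p.1 * uu p.2
        = 2 * ∑ p ∈ Finset.HasAntidiagonal.antidiagonal (n+1), (p.1:ℝ) * (uu p.1 * uu p.2) := by
      rw [two_mul]
      nth_rw 2 [hs]
      rw [← Finset.sum_add_distrib, Finset.mul_sum]
      apply Finset.sum_congr rfl
      intro p hp
      rw [Finset.HasAntidiagonal.mem_antidiagonal] at hp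
      have : (n:ℝ) + 1 = p.1 + p.2 := by exact_mod_cast hp.symm
      rw [this]; ring
    have h2 : ∑ p ∈ Finset.HasAntidiagonal.antidiagonal (n+1), (p.1:ℝ) * (uu p.1 * uu p.2)
        = ∑ p ∈ Finset.HasAntidiagonal.antidiagonal n, ((p.1:ℝ) + 3/2) * (uu p.1 * uu p.2) := by
      rw [Finset.Nat.sum_antidiagonal_succ]
      simp only [Nat.cast_zero, zero_mul, zero_add]
      apply Finset.sum_congr rfl
      intro p _
      have := uu_succ p.1
      push_cast
      rw [← mul_assoc, this, mul_assoc]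
    have hs' : ∑ p ∈ Finset.HasAntidiagonal.antidiagonal n, (p.1:ℝ) * (uu p.1 * uu p.2)
        = ∑ p ∈ Finset.HasAntidiagonal.antidiagonal n, (p.2:ℝ) * (uu p.1 * uu p.2) := by
      rw [← Finset.Nat.sum_antidiagonal_swap]
      apply Finset.sum_congr rfl
      intro p _
      simp; left; ring
    have h3 : 2 * ∑ p ∈ Finset.HasAntidiagonal.antidiagonal n, ((p.1:ℝ) + 3/2) * (uu p.1 * uu p.2)
        = (n + 3) * ∑ p ∈ Finset.HasAntidiagonal.antidiagonal n, uu p.1 * uu p.2 := by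
      have : ∀ p : ℕ × ℕ, ((p.1:ℝ) + 3/2) * (uu p.1 * uu p.2)
        = (p.1:ℝ) * (uu p.1 * uu p.2) + 3/2 * (uu p.1 * uu p.2) := fun p => by ring
      simp only [this]
      rw [Finset.sum_add_distrib, ← Finset.mul_sum]
      have : (n:ℝ) * ∑ p ∈ Finset.HasAntidiagonal.antidiagonal n, uu p.1 * uu p.2
        = 2 * ∑ p ∈ Finset.HasAntidiagonal.antidiagonal n, (p.1:ℝ) * (uu p.1 * uu p.2) := by
        rw [two_mul]
        nth_rw 2 [hs']
        rw [← Finset.sum_add_distrib, Finset.mul_sum]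
        apply Finset.sum_congr rfl
        intro p hp
        rw [Finset.HasAntidiagonal.mem_antidiagonal] at hp
        have : (n:ℝ) = p.1 + p.2 := by exact_mod_cast hp.symm
        rw [this]; ring
      rw [add_mul, this]; ring
    rw [h2, h3, ih] at h1
    have : ((n:ℝ)+1) ≠ 0 := by positivity
    apply mul_left_cancel₀ this
    rw [h1]; push_cast; ring

instance DD_ms : MeasureSpace DD := Measure.Subtype.measureSpace

lemma DD_norm_lt (s : DD) : ‖(s:ℂ)‖ < 1 := by
  have := s.2
  rwa [mem_ball_zero_iff] at this

lemma DD_vol : volume (Set.univ : Set DD) = ENNReal.ofReal Real.pi := by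
  rw [Measure.Subtype.volume_univ measurableSet_ball.nullMeasurableSet, Complex.volume_ball]
  simp
  rw [ENNReal.ofReal, NNReal.pi, Real.toNNReal_of_nonneg Real.pi_pos.le]
  rfl

instance DD_fin : IsFiniteMeasure (volume : Measure DD) := ⟨by rw [DD_vol]; simp⟩

lemma DD_bdd_int (F : DD → ℂ) (hF : Continuous F) (C : ℝ) (hC : ∀ s, ‖F s‖ ≤ C) :
    Integrable F volume :=
  Integrable.of_bound hF.aestronglyMeasurable C (ae_of_all _ hC)


lemma int_DD {E : Type*} [NormedAddCommGroup E] [NormedSpace ℝ E] (F : ℂ → E) :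
    ∫ s : DD, F s = ∫ z in Metric.ball (0:ℂ) 1, F z :=
  integral_subtype measurableSet_ball F

lemma int_norm_pow (N : ℕ) : ∫ s : DD, ‖(s:ℂ)‖ ^ N = 2 * Real.pi / (N + 2) := by
  rw [int_DD (fun z : ℂ => ‖z‖ ^ N), ← integral_indicator measurableSet_ball]
  have h1 : ∀ z : ℂ, (Metric.ball (0:ℂ) 1).indicator (fun z : ℂ => ‖z‖ ^ N) z
      = (Set.Iio (1:ℝ)).indicator (fun r : ℝ => r ^ N) ‖z‖ := by
    intro z
    simp [Set.indicator, mem_ball_zero_iff]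
  simp_rw [h1]
  rw [integral_fun_norm_addHaar (volume : Measure ℂ)]
  have h2 : (volume : Measure ℂ).real (Metric.ball 0 1) = Real.pi := by
    simp [Measure.real, Complex.volume_ball]
  have h3 : ∫ y in Set.Ioi (0 : ℝ), y ^ (Module.finrank ℝ ℂ - 1) •
      (Set.Iio (1:ℝ)).indicator (fun r : ℝ => r ^ N) y = 1 / (N + 2) := by
    have : ∀ y : ℝ, y ^ (Module.finrank ℝ ℂ - 1) •
      (Set.Iio (1:ℝ)).indicator (fun r : ℝ => r ^ N) y
        = (Set.Iio (1:ℝ)).indicator (fun r : ℝ => r ^ (N+1)) y := by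
      intro y
      simp [Set.indicator, Complex.finrank_real_complex]
      rw [pow_succ']
    simp_rw [this]
    rw [setIntegral_indicator measurableSet_Iio, Set.Ioi_inter_Iio,
      ← integral_Ioc_eq_integral_Ioo, ← intervalIntegral.integral_of_le zero_le_one, integral_pow]
    push_cast
    simp
    ring
  rw [h2, h3, Complex.finrank_real_complex]
  simp
  ring

lemma int_off (n m : ℕ) (h : n ≠ m) :
    ∫ s : DD, (s:ℂ) ^ n * (starRingEnd ℂ (s:ℂ)) ^ m = 0 := by
  rw [int_DD (fun z : ℂ => z ^ n * (starRingEnd ℂ z) ^ m)]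
  have hd : ((n:ℝ) - m) ≠ 0 := sub_ne_zero.mpr (by exact_mod_cast h)
  set t : ℝ := Real.pi / (n - m) with ht
  set a : Circle := Circle.exp t
  have hmp : MeasurePreserving (rotation a) (volume : Measure ℂ) volume :=
    (rotation a).measurePreserving
  have hr := hmp.setIntegral_preimage_emb (rotation a).toHomeomorph.measurableEmbedding
    (fun z : ℂ => z ^ n * (starRingEnd ℂ z) ^ m) (Metric.ball (0:ℂ) 1)
  have hb : (rotation a) ⁻¹' (Metric.ball (0:ℂ) 1) = Metric.ball (0:ℂ) 1 := by
    ext z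
    rw [Set.mem_preimage, mem_ball_zero_iff, mem_ball_zero_iff, LinearIsometryEquiv.norm_map]
  rw [hb] at hr
  have key : (a:ℂ) ^ n * (starRingEnd ℂ (a:ℂ)) ^ m = -1 := by
    simp only [a, Circle.coe_exp]
    rw [← Complex.exp_conj, ← Complex.exp_nat_mul, ← Complex.exp_nat_mul, ← Complex.exp_add]
    rw [← Complex.exp_pi_mul_I]
    congr 1
    simp
    have : (((n:ℝ) - m) * t : ℝ) = Real.pi := by rw [ht]; field_simp
    have : ((n:ℂ) - m) * t = Real.pi := by exact_mod_cast congrArg (fun x : ℝ => (x:ℂ)) this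
    rw [← this]; ring
  have h2 : ∀ z : ℂ, (rotation a z) ^ n * (starRingEnd ℂ (rotation a z)) ^ m
      = (-1) * (z ^ n * (starRingEnd ℂ z) ^ m) := by
    intro z
    rw [← key, rotation_apply, map_mul]; ring
  simp only [h2] at hr
  rw [integral_const_mul] at hr
  linear_combination (-1/2) * hr

lemma int_diag (n : ℕ) :
    ∫ s : DD, (s:ℂ) ^ n * (starRingEnd ℂ (s:ℂ)) ^ n = (Real.pi / (n+1) : ℝ) := by
  have : ∀ s : DD, (s:ℂ) ^ n * (starRingEnd ℂ (s:ℂ)) ^ n = ((‖(s:ℂ)‖ ^ (2*n) : ℝ) : ℂ) := by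
    intro s
    rw [← mul_pow, Complex.mul_conj, Complex.normSq_eq_norm_sq]
    push_cast
    rw [pow_mul]
  simp_rw [this]
  rw [integral_complex_ofReal, int_norm_pow]
  congr 1
  push_cast
  field_simp

lemma sum_geo2 (r : ℝ) (h0 : 0 ≤ r) (h1 : r < 1) :
    Summable (fun n : ℕ => ((n:ℝ)+1) * (n+2) * r ^ n) := by
  have hr : ‖r‖ < 1 := by rwa [Real.norm_of_nonneg h0]
  have a0 := summable_pow_mul_geometric_of_norm_lt_one (R := ℝ) 0 hr
  have a1 := summable_pow_mul_geometric_of_norm_lt_one (R := ℝ) 1 hr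
  have a2 := summable_pow_mul_geometric_of_norm_lt_one (R := ℝ) 2 hr
  refine ((a2.add (a1.mul_left 3)).add (a0.mul_left 2)).congr ?_
  intro n; ring

lemma sum_uu (r : ℝ) (h0 : 0 ≤ r) (h1 : r < 1) :
    Summable (fun n : ℕ => uu n * r ^ n) := by
  refine Summable.of_nonneg_of_le (fun n => mul_nonneg (uu_pos n).le (by positivity)) ?_
    (sum_geo2 r h0 h1)
  intro n
  have := uu_le n
  have hn : (0:ℝ) ≤ n := by positivity
  gcongr
  nlinarith

lemma poly_L2 (c : ℕ → ℂ) (N : ℕ) :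
    ∫⁻ s : DD, ‖∑ i ∈ Finset.range N, c i * (starRingEnd ℂ (s:ℂ)) ^ i‖ₑ ^ (2:ℝ)
      = ENNReal.ofReal (∑ i ∈ Finset.range N, ‖c i‖ ^ 2 * (Real.pi / (i+1))) := by
  have hcont : ∀ N, Continuous fun s : DD => ∑ i ∈ Finset.range N, c i * (starRingEnd ℂ (s:ℂ)) ^ i := by
    intro N; fun_prop
  have hbd : ∀ s : DD, ‖∑ i ∈ Finset.range N, c i * (starRingEnd ℂ (s:ℂ)) ^ i‖
      ≤ ∑ i ∈ Finset.range N, ‖c i‖ := by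
    intro s
    refine (norm_sum_le _ _).trans (Finset.sum_le_sum fun i _ => ?_)
    rw [norm_mul, norm_pow, RCLike.norm_conj]
    exact mul_le_of_le_one_right (norm_nonneg _) (pow_le_one₀ (norm_nonneg _) (DD_norm_lt s).le)
  have hint : Integrable (fun s : DD => ‖∑ i ∈ Finset.range N, c i * (starRingEnd ℂ (s:ℂ)) ^ i‖ ^ 2)
      volume := by
    refine Integrable.of_bound ((hcont N).norm.pow 2).aestronglyMeasurable
      ((∑ i ∈ Finset.range N, ‖c i‖)^2) (ae_of_all _ fun s => ?_)
    rw [Real.norm_of_nonneg (by positivity)]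
    gcongr
    exact hbd s
  have h1 : ∫ s : DD, ‖∑ i ∈ Finset.range N, c i * (starRingEnd ℂ (s:ℂ)) ^ i‖ ^ 2
      = ∑ i ∈ Finset.range N, ‖c i‖ ^ 2 * (Real.pi / (i+1)) := by
    rw [← Complex.ofReal_inj, ← integral_complex_ofReal]
    have e : ∀ s : DD, ((‖∑ i ∈ Finset.range N, c i * (starRingEnd ℂ (s:ℂ)) ^ i‖ ^ 2 : ℝ) : ℂ)
        = ∑ j ∈ Finset.range N, ∑ i ∈ Finset.range N, (c i * starRingEnd ℂ (c j)) *
          ((s:ℂ) ^ j * (starRingEnd ℂ (s:ℂ)) ^ i) := by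
      intro s
      rw [← Complex.normSq_eq_norm_sq, ← Complex.mul_conj, map_sum, Finset.sum_mul_sum,
        Finset.sum_comm]
      refine Finset.sum_congr rfl fun j _ => Finset.sum_congr rfl fun i _ => ?_
      simp only [map_mul, map_pow, Complex.conj_conj]
      ring
    have hi : ∀ i j, Integrable (fun s : DD => (c i * starRingEnd ℂ (c j)) *
          ((s:ℂ) ^ j * (starRingEnd ℂ (s:ℂ)) ^ i)) volume := by
      intro i j
      refine (DD_bdd_int _ (by fun_prop) 1 fun s => ?_).const_mul _
      rw [norm_mul, norm_pow, norm_pow, RCLike.norm_conj, ← pow_add]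
      exact pow_le_one₀ (norm_nonneg _) (DD_norm_lt s).le
    simp_rw [e]
    rw [integral_finsetSum _ fun j _ => integrable_finsetSum _ fun i _ => hi i j]
    push_cast
    refine Finset.sum_congr rfl fun j hj => ?_
    rw [integral_finsetSum _ fun i _ => hi i j]
    rw [Finset.sum_eq_single j]
    · rw [integral_const_mul, int_diag, Complex.mul_conj, Complex.normSq_eq_norm_sq]
      push_cast; rfl
    · intro i _ hij
      rw [integral_const_mul, int_off j i hij.symm, mul_zero]
    · intro h; exact absurd hj h
  rw [← h1, ofReal_integral_eq_lintegral_ofReal hint (ae_of_all _ fun s => by positivity)]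
  refine lintegral_congr fun s => ?_
  rw [← ofReal_norm, ENNReal.ofReal_rpow_of_nonneg (norm_nonneg _) (by norm_num)]
  norm_num

/-- weighted series -/
def XX (v : ℕ → ℂ) (s : DD) : ℂ := ∑' i, (uu i : ℂ) * v i * (starRingEnd ℂ (s:ℂ)) ^ i

lemma XX_summable (v : ℕ → ℂ) (B : ℝ) (hB : ∀ i, ‖v i‖ ≤ B) (s : DD) :
    Summable fun i => ‖(uu i : ℂ) * v i * (starRingEnd ℂ (s:ℂ)) ^ i‖ := by
  refine Summable.of_nonneg_of_le (fun _ => norm_nonneg _) (fun i => ?_)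
    ((sum_uu ‖(s:ℂ)‖ (norm_nonneg _) (DD_norm_lt s)).mul_left B)
  rw [norm_mul, norm_mul, norm_pow, RCLike.norm_conj, Complex.norm_real,
    Real.norm_of_nonneg (uu_pos i).le]
  have := hB i
  have := (uu_pos i).le
  calc uu i * ‖v i‖ * ‖(s:ℂ)‖ ^ i ≤ uu i * B * ‖(s:ℂ)‖ ^ i := by gcongr
    _ = _ := by ring

lemma XX_tendsto (v : ℕ → ℂ) (B : ℝ) (hB : ∀ i, ‖v i‖ ≤ B) (s : DD) :
    Tendsto (fun N => ∑ i ∈ Finset.range N, (uu i : ℂ) * v i * (starRingEnd ℂ (s:ℂ)) ^ i) atTop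
      (nhds (XX v s)) :=
  (XX_summable v B hB s).of_norm.hasSum.tendsto_sum_nat

lemma XX_meas (v : ℕ → ℂ) (B : ℝ) (hB : ∀ i, ‖v i‖ ≤ B) : Measurable (XX v) := by
  refine measurable_of_tendsto_metrizable (f := fun N (s : DD) =>
    ∑ i ∈ Finset.range N, (uu i : ℂ) * v i * (starRingEnd ℂ (s:ℂ)) ^ i) (fun N => ?_) ?_
  · exact Continuous.measurable (by fun_prop)
  · rw [tendsto_pi_nhds]; exact fun s => XX_tendsto v B hB s

lemma XX_L2 (v : ℕ → ℂ) (B : ℝ) (hB0 : 0 ≤ B) (hB : HasSum (fun i => ‖v i‖ ^ 2) (B ^ 2)) :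
    ∫⁻ s : DD, ‖XX v s‖ₑ ^ (2:ℝ) ≤ ENNReal.ofReal (Real.pi * B ^ 2) := by
  have hb : ∀ i, ‖v i‖ ≤ B := by
    intro i
    have : ‖v i‖ ^ 2 ≤ B ^ 2 := le_hasSum hB i fun _ _ => by positivity
    exact (sq_le_sq₀ (norm_nonneg _) hB0).mp this
  have hl : ∀ s : DD, ‖XX v s‖ₑ ^ (2:ℝ) = liminf (fun N =>
      ‖∑ i ∈ Finset.range N, (uu i : ℂ) * v i * (starRingEnd ℂ (s:ℂ)) ^ i‖ₑ ^ (2:ℝ)) atTop := by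
    intro s
    refine (Tendsto.liminf_eq ?_).symm
    exact ((ENNReal.continuous_rpow_const (y := 2)).tendsto _).comp (XX_tendsto v B hb s).enorm
  simp_rw [hl]
  refine (lintegral_liminf_le fun N => ?_).trans ?_
  · exact Continuous.measurable ((ENNReal.continuous_rpow_const (y := 2)).comp
      (Continuous.enorm (by fun_prop)))
  · refine liminf_le_of_le (by isBoundedDefault) fun b hb' => ?_
    obtain ⟨N, hN⟩ := hb'.exists
    refine hN.trans ?_
    rw [poly_L2]
    apply ENNReal.ofReal_le_ofReal
    calc ∑ i ∈ Finset.range N, ‖(uu i : ℂ) * v i‖ ^ 2 * (Real.pi / (i+1))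
        ≤ ∑ i ∈ Finset.range N, Real.pi * ‖v i‖ ^ 2 := by
          refine Finset.sum_le_sum fun i _ => ?_
          rw [norm_mul, Complex.norm_real, Real.norm_of_nonneg (uu_pos i).le, mul_pow]
          have h1 := uu_sq_le i
          have h2 : uu i ^ 2 / (i+1) ≤ 1 := (div_le_one (by positivity)).mpr h1
          calc _ = (uu i ^ 2 / (i+1)) * (Real.pi * ‖v i‖ ^ 2) := by ring
            _ ≤ 1 * (Real.pi * ‖v i‖ ^ 2) := by
              have := Real.pi_pos
              gcongr
            _ = _ := one_mul _
      _ = Real.pi * ∑ i ∈ Finset.range N, ‖v i‖ ^ 2 := by rw [Finset.mul_sum]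
      _ ≤ Real.pi * B ^ 2 := by
          gcongr
          exact sum_le_hasSum _ (fun _ _ => by positivity) hB

/-- the function G -/
def GG (a : ℕ → ℂ) (s : DD) : ℂ :=
  ∑' n : ℕ, (((n:ℂ)+1) * (n+2)) * a n * (starRingEnd ℂ (s:ℂ)) ^ n

lemma GG_eq (a : ℕ → ℂ) (x y : ℕ → ℕ → ℂ) (A B : ℕ → ℝ) (hx : ∀ k i, ‖x k i‖ ≤ A k)
    (hy : ∀ k i, ‖y k i‖ ≤ B k) (hs : Summable fun k => A k * B k)
    (h : ∀ i j, a (i+j) = ∑' k, x k i * y k j) (s : DD) :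
    (Real.pi / 8 : ℂ) * GG a s = ∑' k, XX (x k) s * XX (y k) s ∧
      Summable (fun k => ‖XX (x k) s * XX (y k) s‖) := by
  set r := ‖(s:ℂ)‖
  set z := starRingEnd ℂ (s:ℂ) with hz
  have hzr : ‖z‖ = r := RCLike.norm_conj _
  have hA : ∀ k, 0 ≤ A k := fun k => (norm_nonneg _).trans (hx k 0)
  have hB : ∀ k, 0 ≤ B k := fun k => (norm_nonneg _).trans (hy k 0)
  have hu := sum_uu r (norm_nonneg _) (DD_norm_lt s)
  have hu0 : ∀ i, 0 ≤ uu i * r ^ i := fun i => mul_nonneg (uu_pos i).le (by positivity)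
  let T : ℕ × (ℕ × ℕ) → ℂ := fun p => ((uu p.2.1 : ℂ) * x p.1 p.2.1 * z ^ p.2.1) *
    ((uu p.2.2 : ℂ) * y p.1 p.2.2 * z ^ p.2.2)
  have huu := hu.mul_of_nonneg hu hu0 hu0
  have hTb := hs.mul_of_nonneg huu (fun k => mul_nonneg (hA k) (hB k))
    (fun p => mul_nonneg (hu0 p.1) (hu0 p.2))
  have hT : Summable fun p => ‖T p‖ := by
    refine Summable.of_nonneg_of_le (fun _ => norm_nonneg _) (fun p => ?_) hTb
    obtain ⟨k, i, j⟩ := p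
    simp only [T, norm_mul, norm_pow, hzr, Complex.norm_real, Real.norm_of_nonneg (uu_pos _).le]
    have h1 := hx k i
    have h2 := hy k j
    have h3 := (uu_pos i).le
    have h4 := (uu_pos j).le
    have h5 := hA k
    have h6 : 0 ≤ r := norm_nonneg _
    calc uu i * ‖x k i‖ * r ^ i * (uu j * ‖y k j‖ * r ^ j)
        ≤ uu i * A k * r ^ i * (uu j * B k * r ^ j) := by gcongr
      _ = _ := by ring
  have hXY : ∀ k, XX (x k) s * XX (y k) s = ∑' q : ℕ × ℕ, T (k, q) := by
    intro k
    exact tsum_mul_tsum_of_summable_norm (XX_summable (x k) _ (hx k) s) (XX_summable (y k) _ (hy k) s)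
  constructor
  · simp_rw [hXY]
    rw [← Summable.tsum_comm (f := fun k q => T (k, q)) hT.of_norm]
    have e : ∀ q : ℕ × ℕ, ∑' k, T (k, q) = (uu q.1 * uu q.2 : ℂ) * (a (q.1 + q.2) * z ^ (q.1+q.2)) := by
      intro q
      rw [h, ← tsum_mul_right, ← tsum_mul_left]
      refine tsum_congr fun k => ?_
      simp only [T]
      rw [pow_add]; ring
    have hq : Summable fun q : ℕ × ℕ => (uu q.1 * uu q.2 : ℂ) * (a (q.1 + q.2) * z ^ (q.1+q.2)) := by
      simp_rw [← e]
      have := hT.of_norm.prod_symm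
      exact this.prod
    simp_rw [e]
    have h5 := ((Finset.HasAntidiagonal.sigmaAntidiagonalEquivProd.summable_iff).mpr hq).tsum_sigma'
      (fun n => (hasSum_fintype _).summable)
    rw [← Finset.HasAntidiagonal.sigmaAntidiagonalEquivProd.tsum_eq]
    refine Eq.trans ?_ h5.symm
    unfold GG
    rw [← tsum_mul_left]
    refine tsum_congr fun n => ?_
    rw [tsum_fintype]
    have hc := congrArg (fun t : ℝ => (t:ℂ)) (uu_conv n)
    push_cast at hc
    calc _ = (Real.pi / 8 * ((n+1) * (n+2)) : ℂ) * (a n * z ^ n) := by rw [hz]; ring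
      _ = ∑ p ∈ Finset.HasAntidiagonal.antidiagonal n, (uu p.1 * uu p.2 : ℂ) * (a n * z ^ n) := by
        rw [← hc, Finset.sum_mul]
      _ = ∑ p ∈ Finset.HasAntidiagonal.antidiagonal n,
            (uu p.1 * uu p.2 : ℂ) * (a (p.1+p.2) * z ^ (p.1+p.2)) := by
        refine Finset.sum_congr rfl fun p hp => ?_
        rw [Finset.HasAntidiagonal.mem_antidiagonal.mp hp]
      _ = _ := by
        rw [← Finset.sum_coe_sort]
        rfl
  · simp_rw [hXY]
    refine Summable.of_nonneg_of_le (fun _ => norm_nonneg _) (fun k => ?_) hT.prod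
    exact norm_tsum_le_tsum_norm (hT.prod_factor k)

lemma ell2_hasSum (x : ell2) : HasSum (fun i => ‖(x : ℕ → ℂ) i‖ ^ 2) (‖x‖ ^ 2) := by
  have := lp.hasSum_norm (p := 2) (by norm_num) x
  simpa using this

lemma GG_summable (a : ℕ → ℂ) (C : ℝ) (hC : ∀ n, ‖a n‖ ≤ C) (s : DD) :
    Summable fun n : ℕ => (((n:ℂ)+1) * (n+2)) * a n * (starRingEnd ℂ (s:ℂ)) ^ n := by
  refine Summable.of_norm_bounded
    ((sum_geo2 ‖(s:ℂ)‖ (norm_nonneg _) (DD_norm_lt s)).mul_left C) fun n => ?_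
  have e1 : ‖(n:ℂ)+1‖ = (n:ℝ)+1 := by
    have : (n:ℂ)+1 = ((n+1:ℕ):ℂ) := by push_cast; ring
    rw [this, Complex.norm_natCast]; push_cast; ring
  have e2 : ‖(n:ℂ)+2‖ = (n:ℝ)+2 := by
    have : (n:ℂ)+2 = ((n+2:ℕ):ℂ) := by push_cast; ring
    rw [this, Complex.norm_natCast]; push_cast; ring
  rw [norm_mul, norm_mul, norm_mul, norm_pow, RCLike.norm_conj, e1, e2]
  have := hC n
  calc ((n:ℝ)+1) * (n+2) * ‖a n‖ * ‖(s:ℂ)‖ ^ n ≤ ((n:ℝ)+1) * (n+2) * C * ‖(s:ℂ)‖ ^ n := by gcongr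
    _ = _ := by ring

lemma GG_meas (a : ℕ → ℂ) (C : ℝ) (hC : ∀ n, ‖a n‖ ≤ C) : Measurable (GG a) := by
  refine measurable_of_tendsto_metrizable (f := fun N (s : DD) =>
    ∑ n ∈ Finset.range N, (((n:ℂ)+1) * (n+2)) * a n * (starRingEnd ℂ (s:ℂ)) ^ n) (fun N => ?_) ?_
  · exact Continuous.measurable (by fun_prop)
  · rw [tendsto_pi_nhds]; exact fun s => (GG_summable a C hC s).hasSum.tendsto_sum_nat

lemma GG_bound (a : ℕ → ℂ) (x y : ℕ → ell2) (hs : Summable fun k => ‖x k‖ * ‖y k‖)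
    (h : ∀ i j, a (i+j) = ∑' k, (x k : ℕ → ℂ) i * (starRingEnd ℂ) ((y k : ℕ → ℂ) j)) :
    ∫⁻ s : DD, ‖GG a s‖ₑ ≤ ENNReal.ofReal (8 * ∑' k, ‖x k‖ * ‖y k‖) := by
  let v : ℕ → ℕ → ℂ := fun k i => (x k : ℕ → ℂ) i
  let w : ℕ → ℕ → ℂ := fun k i => (starRingEnd ℂ) ((y k : ℕ → ℂ) i)
  have hv : ∀ k i, ‖v k i‖ ≤ ‖x k‖ := fun k i => ell2_le _ _
  have hw : ∀ k i, ‖w k i‖ ≤ ‖y k‖ := fun k i => by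
    simp only [w, RCLike.norm_conj]; exact ell2_le _ _
  have hv2 : ∀ k, HasSum (fun i => ‖v k i‖ ^ 2) (‖x k‖ ^ 2) := fun k => ell2_hasSum _
  have hw2 : ∀ k, HasSum (fun i => ‖w k i‖ ^ 2) (‖y k‖ ^ 2) := fun k => by
    simp only [w, RCLike.norm_conj]; exact ell2_hasSum _
  have hpt : ∀ s, ‖GG a s‖ₑ ≤ ENNReal.ofReal (8 / Real.pi) * ∑' k, ‖XX (v k) s‖ₑ * ‖XX (w k) s‖ₑ := by
    intro s
    obtain ⟨h1, h2⟩ := GG_eq a v w _ _ hv hw hs h s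
    have h3 : GG a s = ((8 / Real.pi : ℝ) : ℂ) * ∑' k, XX (v k) s * XX (w k) s := by
      rw [← h1]
      have : (Real.pi : ℂ) ≠ 0 := by exact_mod_cast Real.pi_ne_zero
      push_cast
      field_simp
    have h4 : ‖GG a s‖ ≤ (8 / Real.pi) * ∑' k, ‖XX (v k) s * XX (w k) s‖ := by
      rw [h3, norm_mul, Complex.norm_real, Real.norm_of_nonneg (by positivity)]
      gcongr
      exact norm_tsum_le_tsum_norm h2
    rw [← ofReal_norm]
    refine (ENNReal.ofReal_le_ofReal h4).trans ?_
    rw [ENNReal.ofReal_mul (by positivity), ENNReal.ofReal_tsum_of_nonneg (fun _ => norm_nonneg _) h2]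
    simp_rw [ofReal_norm, enorm_mul]
    exact le_rfl
  refine (lintegral_mono hpt).trans ?_
  have hmv : ∀ k, Measurable (XX (v k)) := fun k => XX_meas _ _ (hv k)
  have hmw : ∀ k, Measurable (XX (w k)) := fun k => XX_meas _ _ (hw k)
  have hk : ∀ k, ∫⁻ s : DD, ‖XX (v k) s‖ₑ * ‖XX (w k) s‖ₑ
      ≤ ENNReal.ofReal (Real.pi * (‖x k‖ * ‖y k‖)) := by
    intro k
    have H := ENNReal.lintegral_mul_le_Lp_mul_Lq (volume : Measure DD) Real.HolderConjugate.two_two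
      (hmv k).enorm.aemeasurable (hmw k).enorm.aemeasurable
    refine H.trans ?_
    have b1 := XX_L2 (v k) ‖x k‖ (norm_nonneg _) (hv2 k)
    have b2 := XX_L2 (w k) ‖y k‖ (norm_nonneg _) (hw2 k)
    calc _ ≤ (ENNReal.ofReal (Real.pi * ‖x k‖ ^ 2)) ^ (1/2:ℝ) *
          (ENNReal.ofReal (Real.pi * ‖y k‖ ^ 2)) ^ (1/2:ℝ) := by gcongr
      _ = _ := by
        have hp := Real.pi_pos.le
        rw [ENNReal.ofReal_rpow_of_nonneg (by positivity) (by norm_num),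
          ENNReal.ofReal_rpow_of_nonneg (by positivity) (by norm_num),
          ← ENNReal.ofReal_mul (by positivity), ← Real.mul_rpow (by positivity) (by positivity),
          ← Real.sqrt_eq_rpow]
        congr 1
        rw [Real.sqrt_eq_iff_mul_self_eq (by positivity) (by positivity)]
        ring
  have hm : ∀ k, Measurable fun s => ‖XX (v k) s‖ₑ * ‖XX (w k) s‖ₑ :=
    fun k => (hmv k).enorm.mul (hmw k).enorm
  rw [lintegral_const_mul _ (Measurable.tsum hm), lintegral_tsum fun k => (hm k).aemeasurable]
  calc _ ≤ ENNReal.ofReal (8 / Real.pi) * ∑' k, ENNReal.ofReal (Real.pi * (‖x k‖ * ‖y k‖)) := by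
        gcongr with k
        exact hk k
    _ = _ := by
      rw [← ENNReal.ofReal_tsum_of_nonneg (fun k => by have := Real.pi_pos; positivity) (hs.mul_left _),
        ← ENNReal.ofReal_mul (by have := Real.pi_pos; positivity), tsum_mul_left]
      congr 1
      have := Real.pi_ne_zero
      field_simp

lemma cs_sum (v w : ℕ → ℝ) (A B : ℝ) (hA : 0 ≤ A) (hB : 0 ≤ B) (hv0 : ∀ i, 0 ≤ v i)
    (hw0 : ∀ i, 0 ≤ w i) (hv : ∀ s : Finset ℕ, ∑ i ∈ s, v i ^ 2 ≤ A ^ 2)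
    (hw : ∀ s : Finset ℕ, ∑ i ∈ s, w i ^ 2 ≤ B ^ 2) :
    Summable (fun i => v i * w i) ∧ ∑' i, v i * w i ≤ A * B := by
  have key : ∀ s : Finset ℕ, ∑ i ∈ s, v i * w i ≤ A * B := by
    intro s
    have h1 := Finset.sum_mul_sq_le_sq_mul_sq s v w
    have h2 : (∑ i ∈ s, v i * w i) ^ 2 ≤ (A * B) ^ 2 := by
      refine h1.trans ?_
      rw [mul_pow]
      exact mul_le_mul (hv s) (hw s) (Finset.sum_nonneg fun _ _ => by positivity) (by positivity)
    exact abs_le_of_sq_le_sq' h2 (by positivity) |>.2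
  exact ⟨summable_of_sum_le (fun i => mul_nonneg (hv0 i) (hw0 i)) key,
    Real.tsum_le_of_sum_le (fun i => mul_nonneg (hv0 i) (hw0 i)) key⟩

lemma a_summable_aux (a : ℕ → ℂ) (x y : ℕ → ell2) (hs : Summable fun k => ‖x k‖ * ‖y k‖)
    (h : ∀ i j, a (i+j) = ∑' k, (x k : ℕ → ℂ) i * (starRingEnd ℂ) ((y k : ℕ → ℂ) j)) (e : ℕ) :
    Summable fun m => ‖a (m + (m + e))‖ := by
  have hk : ∀ k, Summable (fun m => ‖(x k : ℕ → ℂ) m‖ * ‖(y k : ℕ → ℂ) (m+e)‖) ∧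
      ∑' m, ‖(x k : ℕ → ℂ) m‖ * ‖(y k : ℕ → ℂ) (m+e)‖ ≤ ‖x k‖ * ‖y k‖ := by
    intro k
    refine cs_sum _ _ _ _ (norm_nonneg _) (norm_nonneg _) (fun _ => norm_nonneg _)
      (fun _ => norm_nonneg _) (fun s => sum_le_hasSum _ (fun _ _ => by positivity) (ell2_hasSum (x k)))
      (fun s => ?_)
    have := sum_le_hasSum (s.map (addRightEmbedding e)) (fun _ _ => by positivity) (ell2_hasSum (y k))
    simpa using this
  have hp : Summable fun p : ℕ × ℕ => ‖(x p.1 : ℕ → ℂ) p.2‖ * ‖(y p.1 : ℕ → ℂ) (p.2+e)‖ := by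
    rw [summable_prod_of_nonneg (fun p => by positivity)]
    refine ⟨fun k => (hk k).1, ?_⟩
    exact Summable.of_nonneg_of_le (fun k => tsum_nonneg fun _ => by positivity)
      (fun k => (hk k).2) hs
  have hp' := hp.prod_symm
  refine Summable.of_nonneg_of_le (fun _ => norm_nonneg _) (fun m => ?_) hp'.prod
  rw [h]
  have := norm_tsum_le_tsum_norm (f := fun k => (x k : ℕ → ℂ) m * (starRingEnd ℂ) ((y k : ℕ → ℂ) (m+e)))
    (by simpa [norm_mul, RCLike.norm_conj] using hp'.prod_factor m)
  simpa [norm_mul, RCLike.norm_conj] using this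

lemma a_summable (a : ℕ → ℂ) (x y : ℕ → ell2) (hs : Summable fun k => ‖x k‖ * ‖y k‖)
    (h : ∀ i j, a (i+j) = ∑' k, (x k : ℕ → ℂ) i * (starRingEnd ℂ) ((y k : ℕ → ℂ) j)) :
    Summable fun m => ‖a m‖ := by
  have h0 := a_summable_aux a x y hs h 0
  have h1 := a_summable_aux a x y hs h 1
  refine (HasSum.even_add_odd (f := fun m => ‖a m‖) (m := ∑' m, ‖a (m + (m+0))‖)
    (m' := ∑' m, ‖a (m + (m+1))‖) ?_ ?_).summable
  · convert h0.hasSum using 4; ring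
  · convert h1.hasSum using 4; ring

lemma GG_coeff (a : ℕ → ℂ) (ha : Summable fun m => ‖a m‖) (n : ℕ) :
    ∫ s : DD, GG a s * (1 - (‖(s:ℂ)‖ ^ 2 : ℝ)) * (s:ℂ) ^ n = Real.pi * a n := by
  let F : ℕ → DD → ℂ := fun m s =>
    ((((m:ℂ)+1) * (m+2)) * a m) * ((starRingEnd ℂ (s:ℂ)) ^ m * (1 - (‖(s:ℂ)‖ ^ 2 : ℝ)) * (s:ℂ) ^ n)
  have hsq : ∀ s : DD, ‖(s:ℂ)‖ ^ 2 < 1 := fun s => by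
    have := DD_norm_lt s
    nlinarith [norm_nonneg (s:ℂ)]
  have hn1 : ∀ s : DD, ‖(1 - (‖(s:ℂ)‖ ^ 2 : ℝ) : ℂ)‖ = 1 - ‖(s:ℂ)‖ ^ 2 := fun s => by
    have : (1 - (‖(s:ℂ)‖ ^ 2 : ℝ) : ℂ) = ((1 - ‖(s:ℂ)‖ ^ 2 : ℝ) : ℂ) := by push_cast; ring
    rw [this, Complex.norm_real, Real.norm_of_nonneg]
    linarith [hsq s]
  have hint0 : ∀ i j : ℕ, Integrable (fun s : DD => (s:ℂ) ^ i * (starRingEnd ℂ (s:ℂ)) ^ j) volume := by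
    intro i j
    refine (DD_bdd_int _ (by fun_prop) 1 fun s => ?_)
    rw [norm_mul, norm_pow, norm_pow, RCLike.norm_conj, ← pow_add]
    exact pow_le_one₀ (norm_nonneg _) (DD_norm_lt s).le
  have hintr : ∀ N : ℕ, Integrable (fun s : DD => ‖(s:ℂ)‖ ^ N) volume := by
    intro N
    refine Integrable.of_bound (Continuous.aestronglyMeasurable (by fun_prop)) 1
      (ae_of_all _ fun s => ?_)
    rw [Real.norm_of_nonneg (by positivity)]
    exact pow_le_one₀ (norm_nonneg _) (DD_norm_lt s).le
  have hFe : ∀ m s, F m s = ((((m:ℂ)+1) * (m+2)) * a m) *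
      ((s:ℂ) ^ n * (starRingEnd ℂ (s:ℂ)) ^ m - (s:ℂ) ^ (n+1) * (starRingEnd ℂ (s:ℂ)) ^ (m+1)) := by
    intro m s
    have : ((‖(s:ℂ)‖ ^ 2 : ℝ) : ℂ) = (s:ℂ) * starRingEnd ℂ (s:ℂ) := by
      rw [Complex.mul_conj, Complex.normSq_eq_norm_sq]
    simp only [F]
    rw [this]; ring
  have hFi : ∀ m, Integrable (F m) volume := by
    intro m
    have : F m = fun s => _ := funext (hFe m)
    rw [this]
    exact ((hint0 _ _).sub (hint0 _ _)).const_mul _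
  have hFn : ∀ m, ∫ s, ‖F m s‖ ≤ 4 * Real.pi * ‖a m‖ := by
    intro m
    have e : ∀ s : DD, ‖F m s‖ = (((m:ℝ)+1) * (m+2) * ‖a m‖) * (‖(s:ℂ)‖ ^ (n+m) - ‖(s:ℂ)‖ ^ (n+m+2)) := by
      intro s
      have e1 : ‖(m:ℂ)+1‖ = (m:ℝ)+1 := by
        have : (m:ℂ)+1 = ((m+1:ℕ):ℂ) := by push_cast; ring
        rw [this, Complex.norm_natCast]; push_cast; ring
      have e2 : ‖(m:ℂ)+2‖ = (m:ℝ)+2 := by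
        have : (m:ℂ)+2 = ((m+2:ℕ):ℂ) := by push_cast; ring
        rw [this, Complex.norm_natCast]; push_cast; ring
      simp only [F]
      rw [norm_mul, norm_mul, norm_mul, norm_mul, norm_mul, e1, e2, norm_pow, norm_pow, hn1,
        RCLike.norm_conj]
      ring
    simp_rw [e]
    rw [integral_const_mul, integral_sub (hintr _) (hintr _), int_norm_pow, int_norm_pow]
    push_cast
    have hn : (0:ℝ) ≤ n := by positivity
    have hm : (0:ℝ) ≤ m := by positivity
    have : ((m:ℝ)+1) * (m+2) * (2 * Real.pi / (n + m + 2) - 2 * Real.pi / (n + m + 2 + 2))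
        ≤ 4 * Real.pi := by
      have e3 : ((m:ℝ)+1) * (m+2) * (2 * Real.pi / (n + m + 2) - 2 * Real.pi / (n + m + 2 + 2))
        = 4 * Real.pi * ((((m:ℝ)+1) * (m+2)) / ((n+m+2) * (n+m+2+2))) := by
        field_simp
        ring
      rw [e3]
      have : ((((m:ℝ)+1) * (m+2)) / ((n+m+2) * (n+m+2+2))) ≤ 1 := by
        rw [div_le_one (by positivity)]
        nlinarith [mul_nonneg hn hm]
      have hp := Real.pi_pos
      nlinarith
    calc _ = (((m:ℝ)+1) * (m+2) * (2 * Real.pi / (n + m + 2) - 2 * Real.pi / (n + m + 2 + 2))) * ‖a m‖ := by ring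
      _ ≤ _ := by gcongr
  have hFs : Summable fun m => ∫ s, ‖F m s‖ :=
    Summable.of_nonneg_of_le (fun m => integral_nonneg fun _ => norm_nonneg _) hFn (ha.mul_left _)
  have H := hasSum_integral_of_summable_integral_norm hFi hFs
  have e0 : ∀ s : DD, GG a s * (1 - (‖(s:ℂ)‖ ^ 2 : ℝ)) * (s:ℂ) ^ n = ∑' m, F m s := by
    intro s
    unfold GG
    rw [← tsum_mul_right, ← tsum_mul_right]
    refine tsum_congr fun m => ?_
    simp only [F]; ring
  simp_rw [e0]
  rw [← H.tsum_eq, tsum_eq_single n]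
  · simp_rw [hFe]
    rw [integral_const_mul, integral_sub (hint0 _ _) (hint0 _ _), int_diag, int_diag]
    push_cast
    have h1 : (n:ℂ) + 1 ≠ 0 := by exact_mod_cast Nat.succ_ne_zero n
    have h2 : (n:ℂ) + 1 + 1 ≠ 0 := by exact_mod_cast Nat.succ_ne_zero (n+1)
    field_simp
    ring
  · intro m hm
    simp_rw [hFe]
    rw [integral_const_mul, integral_sub (hint0 _ _) (hint0 _ _), int_off n m hm.symm,
      int_off (n+1) (m+1) (by omega)]
    simp

lemma inner_self_C {E : Type*} [NormedAddCommGroup E] [InnerProductSpace ℂ E] (x : E) :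
    inner ℂ x x = ((‖x‖ ^ 2 : ℝ) : ℂ) := by
  rw [inner_self_eq_norm_sq_to_K]; push_cast; rfl

lemma tc_of_index {ι : Type*} (h : ℕ → ℕ → ℂ) (x y : ι → ell2)
    (hs : Summable fun k => ‖x k‖ * ‖y k‖)
    (hh : ∀ i j, HasSum (fun k => (x k : ℕ → ℂ) i * (starRingEnd ℂ) ((y k : ℕ → ℂ) j)) (h i j)) :
    IsTraceClass h := by
  classical
  set S : Set ι := Function.support (fun k => ‖x k‖ * ‖y k‖) with hS
  have hc : S.Countable := hs.countable_support
  have : Countable S := hc.to_subtype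
  obtain ⟨g, hg⟩ := exists_injective_nat S
  have hz : ∀ k, k ∉ S → x k = 0 ∨ y k = 0 := by
    intro k hk
    have h0 : ‖x k‖ * ‖y k‖ = 0 := by simpa only [hS, Function.mem_support, not_not] using hk
    rcases mul_eq_zero.mp h0 with h | h
    · exact Or.inl (norm_eq_zero.mp h)
    · exact Or.inr (norm_eq_zero.mp h)
  obtain ⟨X, hX, hX'⟩ : ∃ X : ℕ → ell2, (∀ k : S, X (g k) = x k) ∧ ∀ n, n ∉ Set.range g → X n = 0 :=
    ⟨Function.extend g (fun k => x k) 0, fun k => hg.extend_apply _ _ k,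
      fun n hn => Function.extend_apply' _ _ _ (by simpa using hn)⟩
  obtain ⟨Y, hY, hY'⟩ : ∃ X : ℕ → ell2, (∀ k : S, X (g k) = y k) ∧ ∀ n, n ∉ Set.range g → X n = 0 :=
    ⟨Function.extend g (fun k => y k) 0, fun k => hg.extend_apply _ _ k,
      fun n hn => Function.extend_apply' _ _ _ (by simpa using hn)⟩
  refine ⟨X, Y, ?_, ?_⟩
  · rw [← hg.summable_iff]
    · refine (hs.subtype S).congr fun k => ?_
      simp [hX, hY]
    · intro n hn
      rw [hX' n hn]; simp
  · intro i j
    symm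
    apply HasSum.tsum_eq
    rw [← hg.hasSum_iff]
    · have h1 : HasSum ((fun k => (x k : ℕ → ℂ) i * (starRingEnd ℂ) ((y k : ℕ → ℂ) j)) ∘
          (Subtype.val : S → ι)) (h i j) := by
        rw [Subtype.val_injective.hasSum_iff]
        · exact hh i j
        · intro k hk
          rcases hz k (by simpa using hk) with h0 | h0 <;> simp [h0]
      convert h1 using 2
      ext k
      simp only [Function.comp, hX, hY]
    · intro n hn
      rw [hX' n hn]; simp

lemma tc_of_hilbert {E : Type*} [NormedAddCommGroup E] [InnerProductSpace ℂ E] [CompleteSpace E]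
    (a b : ℕ → E) (ha : Summable fun i => ‖a i‖ ^ 2) (hb : Summable fun i => ‖b i‖ ^ 2) :
    IsTraceClass (fun i j => inner ℂ (a i) (b j)) := by
  obtain ⟨w, e, -⟩ := exists_hilbertBasis ℂ E
  have key : ∀ a : ℕ → E, (Summable fun i => ‖a i‖ ^ 2) →
      ∃ x : w → ell2, (∀ k i, (x k : ℕ → ℂ) i = inner ℂ (a i) (e k)) ∧ Summable fun k => ‖x k‖ ^ 2 := by
    intro a ha
    have h1 : ∀ i, HasSum (fun k => ‖inner ℂ (a i) (e k)‖ ^ 2) (‖a i‖ ^ 2) := by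
      intro i
      have := e.hasSum_inner_mul_inner (a i) (a i)
      rw [inner_self_C] at this
      have e1 : ∀ k, inner ℂ (a i) (e k) * inner ℂ (e k) (a i) = ((‖inner ℂ (a i) (e k)‖ ^ 2 : ℝ) : ℂ) := by
        intro k
        rw [← inner_conj_symm (e k) (a i), Complex.mul_conj, Complex.normSq_eq_norm_sq]
      simp_rw [e1] at this
      exact_mod_cast this
    have h2 : Summable fun p : ℕ × w => ‖inner ℂ (a p.1) (e p.2)‖ ^ 2 := by
      rw [summable_prod_of_nonneg (fun p => by positivity)]
      refine ⟨fun i => (h1 i).summable, ?_⟩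
      simpa only [(h1 _).tsum_eq] using ha
    have h3 := h2.prod_symm
    have hmem : ∀ k : w, Memℓp (fun i => inner ℂ (a i) (e k) : ℕ → ℂ) 2 := by
      intro k
      apply memℓp_gen
      simpa using h3.prod_factor k
    refine ⟨fun k => ⟨fun i => inner ℂ (a i) (e k), hmem k⟩, fun k i => rfl, ?_⟩
    have h4 := h3.prod
    refine h4.congr fun k => ?_
    exact (ell2_hasSum ⟨fun i => inner ℂ (a i) (e k), hmem k⟩).tsum_eq
  obtain ⟨x, hx, hxs⟩ := key a ha
  obtain ⟨y, hy, hys⟩ := key b hb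
  refine tc_of_index _ x y ?_ ?_
  · refine Summable.of_nonneg_of_le (fun k => by positivity) (fun k => ?_) (hxs.add hys)
    nlinarith [sq_nonneg (‖x k‖ - ‖y k‖), sq_nonneg (‖x k‖), sq_nonneg ‖y k‖]
  · intro i j
    simp only [hx, hy, inner_conj_symm]
    exact e.hasSum_inner_mul_inner (a i) (b j)

lemma one_sub_sq_pos (s : DD) : 0 < 1 - ‖(s:ℂ)‖ ^ 2 := by
  have := DD_norm_lt s
  nlinarith [norm_nonneg (s:ℂ)]

lemma one_sub_le (s : DD) : 1 - ‖(s:ℂ)‖ ^ 2 ≤ ‖1 - (s:ℂ) ^ 2‖ := by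
  have := norm_sub_norm_le (1:ℂ) ((s:ℂ)^2)
  simpa using this

lemma L2_aux (ρ : Measure DD) (F : ℕ → DD → ℂ) (hF : ∀ i, MemLp (F i) 2 ρ)
    (hn : ∀ i, ∀ᵐ s ∂ρ, ‖F i s‖ ^ 2 = ‖1 - (s:ℂ) ^ 2‖ * (‖(s:ℂ)‖ ^ 2) ^ i)
    (hint : Integrable
          (fun s : DD => ‖1 - (s : ℂ) ^ 2‖ / (1 - ‖(s : ℂ)‖ ^ 2)) ρ) :
    Summable fun i => ‖(hF i).toLp (F i)‖ ^ 2 := by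
  have h1 : ∀ i, ‖(hF i).toLp (F i)‖ ^ 2 = ∫ s, ‖1 - (s:ℂ) ^ 2‖ * (‖(s:ℂ)‖ ^ 2) ^ i ∂ρ := by
    intro i
    have := inner_self_C ((hF i).toLp (F i))
    rw [L2.inner_def] at this
    have e : ∫ s, inner ℂ ((hF i).toLp (F i) s) ((hF i).toLp (F i) s) ∂ρ
        = ∫ s, ((‖1 - (s:ℂ) ^ 2‖ * (‖(s:ℂ)‖ ^ 2) ^ i : ℝ) : ℂ) ∂ρ := by
      refine integral_congr_ae ?_
      filter_upwards [(hF i).coeFn_toLp, hn i] with s hs1 hs2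
      rw [hs1, ← hs2, inner_self_C]
    rw [e, integral_complex_ofReal] at this
    exact (Complex.ofReal_injective this).symm
  simp_rw [h1]
  have hi : ∀ i, Integrable (fun s : DD => ‖1 - (s:ℂ) ^ 2‖ * (‖(s:ℂ)‖ ^ 2) ^ i) ρ := by
    intro i
    refine ((hF i).integrable_norm_pow (by norm_num)).congr ?_
    filter_upwards [hn i] with s hs
    exact hs
  refine summable_of_sum_range_le (c := ∫ s : DD, ‖1 - (s : ℂ) ^ 2‖ / (1 - ‖(s : ℂ)‖ ^ 2) ∂ρ)
    (fun i => integral_nonneg fun s => by positivity) fun N => ?_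
  rw [← integral_finsetSum _ fun i _ => hi i]
  refine integral_mono (integrable_finsetSum _ fun i _ => hi i) hint fun s => ?_
  simp only
  rw [← Finset.mul_sum, div_eq_mul_inv]
  gcongr
  have h0 : (0:ℝ) ≤ ‖(s:ℂ)‖ ^ 2 := by positivity
  have h1 : ‖(s:ℂ)‖ ^ 2 < 1 := by linarith [one_sub_sq_pos s]
  rw [← tsum_geometric_of_lt_one h0 h1]
  exact (summable_geometric_of_lt_one h0 h1).sum_le_tsum _ fun _ _ => by positivity

lemma reverse_dir (ψ : ℕ → ℂ) (cp cm : ℂ) (ρ : Measure DD) (f : DD → ℂ)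
    (hfin : IsFiniteMeasure ρ) (hf : AEStronglyMeasurable f ρ) (hf1 : ∀ᵐ s ∂ρ, ‖f s‖ = 1)
    (hψ : ∀ n : ℕ, ψ n = cp + (-1 : ℂ) ^ n * cm + ∫ s, f s * (s : ℂ) ^ n ∂ρ)
    (hint : Integrable
          (fun s : DD => ‖1 - (s : ℂ) ^ 2‖ / (1 - ‖(s : ℂ)‖ ^ 2)) ρ) : MemCp ψ := by
  let q : DD → ℝ := fun s => Real.sqrt ‖1 - (s:ℂ) ^ 2‖
  have hqc : Continuous q := by fun_prop
  have hq0 : ∀ s : DD, 0 < ‖1 - (s:ℂ)^2‖ := fun s => (one_sub_sq_pos s).trans_le (one_sub_le s)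
  have hqp : ∀ s, 0 < q s := fun s => Real.sqrt_pos.mpr (hq0 s)
  have hq2 : ∀ s, q s ^ 2 = ‖1 - (s:ℂ) ^ 2‖ := fun s => Real.sq_sqrt (norm_nonneg _)
  have hqb : ∀ s, q s ≤ 2 := by
    intro s
    have h1 : ‖1 - (s:ℂ)^2‖ ≤ 2 := by
      refine (norm_sub_le _ _).trans ?_
      have := one_sub_sq_pos s
      rw [norm_one, norm_pow]; linarith
    have := hq2 s
    nlinarith [hqp s]
  let Fb : ℕ → DD → ℂ := fun j s => (q s : ℂ) * (s:ℂ) ^ j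
  let Fa : ℕ → DD → ℂ := fun i s => starRingEnd ℂ (f s * ((1 - (s:ℂ)^2) / (q s : ℂ)) * (s:ℂ) ^ i)
  have hnb : ∀ i s, ‖Fb i s‖ = q s * ‖(s:ℂ)‖ ^ i := by
    intro i s
    simp only [Fb, norm_mul, norm_pow, Complex.norm_real, Real.norm_of_nonneg (hqp s).le]
  have hna : ∀ i s, ‖f s‖ = 1 → ‖Fa i s‖ = q s * ‖(s:ℂ)‖ ^ i := by
    intro i s hs
    simp only [Fa, RCLike.norm_conj, norm_mul, norm_div, norm_pow, Complex.norm_real,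
      Real.norm_of_nonneg (hqp s).le, hs, one_mul]
    rw [← hq2]
    have := (hqp s).ne'
    field_simp
  have hbd : ∀ i (s : DD), q s * ‖(s:ℂ)‖ ^ i ≤ 2 := by
    intro i s
    exact (mul_le_of_le_one_right (hqp s).le (pow_le_one₀ (norm_nonneg _) (DD_norm_lt s).le)).trans (hqb s)
  have hmb : ∀ i, MemLp (Fb i) 2 ρ := by
    intro i
    refine MemLp.of_bound (Continuous.aestronglyMeasurable (by fun_prop)) 2 (ae_of_all _ fun s => ?_)
    rw [hnb]; exact hbd i s
  have hma : ∀ i, MemLp (Fa i) 2 ρ := by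
    intro i
    refine MemLp.of_bound ?_ 2 ?_
    · refine Complex.continuous_conj.comp_aestronglyMeasurable ?_
      refine (hf.mul ?_).mul (Continuous.aestronglyMeasurable (by fun_prop))
      refine Continuous.aestronglyMeasurable (Continuous.div (by fun_prop) (by fun_prop) fun s => ?_)
      exact_mod_cast (hqp s).ne'
    · filter_upwards [hf1] with s hs
      rw [hna i s hs]; exact hbd i s
  have sa := L2_aux ρ Fa hma (fun i => by
    filter_upwards [hf1] with s hs
    rw [hna i s hs, mul_pow, hq2, ← pow_mul, ← pow_mul, mul_comm i 2]) hint
  have sb := L2_aux ρ Fb hmb (fun i => ae_of_all _ fun s => by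
    rw [hnb i s, mul_pow, hq2, ← pow_mul, ← pow_mul, mul_comm i 2]) hint
  have T := tc_of_hilbert _ _ sa sb
  unfold MemCp
  convert T using 3 with i j
  rw [L2.inner_def]
  have hI : ∀ n : ℕ, Integrable (fun s : DD => f s * (s:ℂ) ^ n) ρ := by
    intro n
    refine Integrable.of_bound (hf.mul (Continuous.aestronglyMeasurable (by fun_prop))) 1 ?_
    filter_upwards [hf1] with s hs
    rw [norm_mul, hs, one_mul, norm_pow]
    exact pow_le_one₀ (norm_nonneg _) (DD_norm_lt s).le
  unfold hankelHat
  rw [hψ, hψ]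
  have e1 : (-1:ℂ) ^ (i+j+2) = (-1) ^ (i+j) := by rw [pow_add]; norm_num
  rw [e1]
  have e2 : ∫ s : DD, f s * (s:ℂ) ^ (i+j) ∂ρ - ∫ s : DD, f s * (s:ℂ) ^ (i+j+2) ∂ρ
      = ∫ s, inner ℂ ((hma i).toLp (Fa i) s) ((hmb j).toLp (Fb j) s) ∂ρ := by
    rw [← integral_sub (hI _) (hI _)]
    refine integral_congr_ae ?_
    filter_upwards [(hma i).coeFn_toLp, (hmb j).coeFn_toLp] with s hs1 hs2
    rw [hs1, hs2, RCLike.inner_apply]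
    simp only [Fa, Fb, Complex.conj_conj]
    have : (q s : ℂ) ≠ 0 := by exact_mod_cast (hqp s).ne'
    field_simp
    ring
  rw [← e2]; ring

lemma forward_dir (ψ : ℕ → ℂ) (hψ : MemCp ψ) :
      ∃ (cp cm : ℂ) (ρ : Measure DD) (f : DD → ℂ),
        IsFiniteMeasure ρ ∧
        AEStronglyMeasurable f ρ ∧
        (∀ᵐ s ∂ρ, ‖f s‖ = 1) ∧
        (∀ n : ℕ, ψ n = cp + (-1 : ℂ) ^ n * cm + ∫ s, f s * (s : ℂ) ^ n ∂ρ) ∧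
        Integrable
          (fun s : DD => ‖1 - (s : ℂ) ^ 2‖ / (1 - ‖(s : ℂ)‖ ^ 2)) ρ ∧
        ‖cp‖ + ‖cm‖ + ∫ s : DD, ‖1 - (s : ℂ) ^ 2‖ / (1 - ‖(s : ℂ)‖ ^ 2) ∂ρ ≤
          (8 / Real.pi) * CpNorm ψ := by
  classical
  obtain ⟨x, y, hs, hxy⟩ := hψ
  set a : ℕ → ℂ := fun n => ψ n - ψ (n+2) with ha
  have hpi := Real.pi_pos
  have hpiC : (Real.pi : ℂ) ≠ 0 := by exact_mod_cast hpi.ne'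
  have hsum : Summable fun m => ‖a m‖ := a_summable a x y hs hxy
  have hC : ∀ n, ‖a n‖ ≤ ∑' m, ‖a m‖ := fun n => hsum.le_tsum n fun _ _ => norm_nonneg _
  have hGm : Measurable (GG a) := GG_meas a _ hC
  have hGi : Integrable (GG a) volume :=
    ⟨hGm.aestronglyMeasurable, (GG_bound a x y hs hxy).trans_lt ENNReal.ofReal_lt_top⟩
  have hGle : ∫ s, ‖GG a s‖ ≤ 8 * traceNorm (hankelHat ψ) := by
    have : (∫ s, ‖GG a s‖) / 8 ≤ traceNorm (hankelHat ψ) := by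
      refine le_csInf ⟨_, x, y, hs, hxy, rfl⟩ ?_
      rintro c ⟨x', y', hs', hxy', rfl⟩
      have hb := GG_bound a x' y' hs' hxy'
      rw [div_le_iff₀ (by norm_num), mul_comm, integral_norm_eq_lintegral_enorm hGm.aestronglyMeasurable]
      exact ENNReal.toReal_le_of_le_ofReal
        (mul_nonneg (by norm_num) (tsum_nonneg fun k => by positivity)) hb
    linarith
  have hne : ∀ s : DD, (1 - (s:ℂ) ^ 2) ≠ 0 := fun s =>
    norm_pos_iff.mp ((one_sub_sq_pos s).trans_le (one_sub_le s))
  -- the density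
  let g : DD → ℂ := fun s => GG a s * (1 - (‖(s:ℂ)‖ ^ 2 : ℝ)) / (Real.pi * (1 - (s:ℂ) ^ 2))
  have hgm : Measurable g := by
    refine (hGm.mul ?_).div ?_
    · exact Continuous.measurable (by fun_prop)
    · exact Continuous.measurable (by fun_prop)
  have hgn : ∀ s, ‖g s‖ = ‖GG a s‖ * (1 - ‖(s:ℂ)‖ ^ 2) / (Real.pi * ‖1 - (s:ℂ) ^ 2‖) := by
    intro s
    have e : (1 - (‖(s:ℂ)‖ ^ 2 : ℝ) : ℂ) = ((1 - ‖(s:ℂ)‖ ^ 2 : ℝ) : ℂ) := by push_cast; ring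
    simp only [g]
    rw [e, norm_div, norm_mul, norm_mul, Complex.norm_real, Complex.norm_real,
      Real.norm_of_nonneg (one_sub_sq_pos s).le, Real.norm_of_nonneg hpi.le]
  have hgw : ∀ s : DD, ‖g s‖ * (‖1 - (s : ℂ) ^ 2‖ / (1 - ‖(s : ℂ)‖ ^ 2)) = ‖GG a s‖ / Real.pi := by
    intro s
    rw [hgn]
    have h1 := (one_sub_sq_pos s).ne'
    have h2 := (norm_pos_iff.mpr (hne s)).ne'
    field_simp
  have hgle : ∀ s, ‖g s‖ ≤ ‖GG a s‖ / Real.pi := by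
    intro s
    rw [← hgw]
    refine le_mul_of_one_le_right (norm_nonneg _) ?_
    rw [one_le_div (one_sub_sq_pos s)]
    exact one_sub_le s
  have hgi : Integrable g volume :=
    (hGi.norm.div_const Real.pi).mono' hgm.aestronglyMeasurable (ae_of_all _ hgle)
  let ρ : Measure DD := volume.withDensity (fun s => (‖g s‖₊ : ENNReal))
  let f : DD → ℂ := fun s => if g s = 0 then 1 else g s / ‖g s‖
  have hfm : Measurable f :=
    Measurable.ite (hgm (measurableSet_singleton 0)) measurable_const
      (hgm.div (Complex.measurable_ofReal.comp hgm.norm))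
  have hf1 : ∀ s, ‖f s‖ = 1 := by
    intro s
    by_cases h : g s = 0
    · simp [f, h]
    · simp [f, h]
  have hfg : ∀ s, (‖g s‖ : ℂ) * f s = g s := by
    intro s
    by_cases h : g s = 0
    · simp [f, h]
    · have : (‖g s‖ : ℂ) ≠ 0 := by simpa using h
      simp only [f, h, if_false]
      field_simp
  have hfin : IsFiniteMeasure ρ := by
    refine isFiniteMeasure_withDensity ?_
    exact hgi.2.ne
  have hnm : Measurable fun s => ‖g s‖₊ := hgm.nnnorm
  have hM : ∀ n : ℕ, ∫ s, f s * (s:ℂ) ^ n ∂ρ = ∫ s : DD, g s * (s:ℂ) ^ n := by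
    intro n
    rw [integral_withDensity_eq_integral_smul hnm]
    refine integral_congr_ae (ae_of_all _ fun s => ?_)
    simp only
    rw [NNReal.smul_def, coe_nnnorm, Complex.real_smul, ← mul_assoc, hfg]
  have hw1 : Integrable (fun s : DD => ‖1 - (s : ℂ) ^ 2‖ / (1 - ‖(s : ℂ)‖ ^ 2)) ρ := by
    rw [integrable_withDensity_iff_integrable_smul hnm]
    refine (hGi.norm.div_const Real.pi).congr (ae_of_all _ fun s => ?_)
    simp only
    rw [NNReal.smul_def, coe_nnnorm, smul_eq_mul, hgw]
  have hw2 : ∫ s : DD, ‖1 - (s : ℂ) ^ 2‖ / (1 - ‖(s : ℂ)‖ ^ 2) ∂ρ = (∫ s, ‖GG a s‖) / Real.pi := by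
    rw [integral_withDensity_eq_integral_smul hnm, ← integral_div]
    refine integral_congr_ae (ae_of_all _ fun s => ?_)
    simp only
    rw [NNReal.smul_def, coe_nnnorm, smul_eq_mul, hgw]
  set M : ℕ → ℂ := fun n => ∫ s : DD, g s * (s:ℂ) ^ n with hMdef
  have hpow : ∀ n (s : DD), ‖(s:ℂ) ^ n‖ ≤ 1 := fun n s => by
    rw [norm_pow]; exact pow_le_one₀ (norm_nonneg _) (DD_norm_lt s).le
  have hMi : ∀ n : ℕ, Integrable (fun s : DD => g s * (s:ℂ) ^ n) volume := by
    intro n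
    refine hgi.norm.mono' (hgm.mul (Continuous.measurable (by fun_prop))).aestronglyMeasurable
      (ae_of_all _ fun s => ?_)
    rw [norm_mul]
    exact mul_le_of_le_one_right (norm_nonneg _) (hpow n s)
  have hMa : ∀ n, M n - M (n+2) = a n := by
    intro n
    simp only [hMdef]
    rw [← integral_sub (hMi _) (hMi _)]
    have := GG_coeff a hsum n
    have e : ∀ s : DD, g s * (s:ℂ) ^ n - g s * (s:ℂ) ^ (n+2)
        = (GG a s * (1 - (‖(s:ℂ)‖ ^ 2 : ℝ)) * (s:ℂ) ^ n) / Real.pi := by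
      intro s
      simp only [g]
      have := hne s
      field_simp
      ring
    simp_rw [e]
    rw [integral_div, this]
    field_simp
  have hM0 : Tendsto M atTop (nhds 0) := by
    have : Tendsto M atTop (nhds (∫ _ : DD, (0:ℂ))) := by
      refine tendsto_integral_of_dominated_convergence (fun s => ‖g s‖)
        (fun n => (hMi n).aestronglyMeasurable) hgi.norm (fun n => ae_of_all _ fun s => ?_)
        (ae_of_all _ fun s => ?_)
      · rw [norm_mul]
        exact mul_le_of_le_one_right (norm_nonneg _) (hpow n s)
      · simpa using (tendsto_pow_atTop_nhds_zero_of_norm_lt_one (DD_norm_lt s)).const_mul (g s)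
    simpa using this
  set d : ℕ → ℂ := fun n => ψ n - M n with hd
  have hd2 : ∀ n, d (n+2) = d n := by
    intro n
    have := hMa n
    simp only [ha] at this
    simp only [hd]
    linear_combination this
  have hde : ∀ n, d (2*n) = d 0 := by
    intro n
    induction n with
    | zero => rfl
    | succ n ih => rw [← ih]; exact hd2 (2*n)
  have hdo : ∀ n, d (2*n+1) = d 1 := by
    intro n
    induction n with
    | zero => rfl
    | succ n ih => rw [← ih]; exact hd2 (2*n+1)
  have t2 : Tendsto (fun n : ℕ => 2 * n) atTop atTop :=
    tendsto_id.const_mul_atTop' (by norm_num)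
  have t3 : Tendsto (fun n : ℕ => 2 * n + 1) atTop atTop := (tendsto_add_atTop_nat 1).comp t2
  have l0 : limUnder atTop (fun n => ψ (2*n)) = d 0 := by
    apply Tendsto.limUnder_eq
    have h := (hM0.comp t2).const_add (d 0)
    rw [add_zero] at h
    refine h.congr fun n => ?_
    simp only [Function.comp]
    rw [← hde n]; simp [hd]
  have l1 : limUnder atTop (fun n => ψ (2*n+1)) = d 1 := by
    apply Tendsto.limUnder_eq
    have h := (hM0.comp t3).const_add (d 1)
    rw [add_zero] at h
    refine h.congr fun n => ?_
    simp only [Function.comp]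
    rw [← hdo n]; simp [hd]
  refine ⟨cOne ψ, cTwo ψ, ρ, f, hfin, hfm.aestronglyMeasurable, ae_of_all _ hf1, ?_, hw1, ?_⟩
  · intro n
    rw [hM n]
    have : ψ n = d n + M n := by simp [hd]
    rw [this]
    congr 1
    unfold cOne cTwo
    rw [l0, l1]
    rcases Nat.even_or_odd' n with ⟨k, rfl | rfl⟩
    · rw [hde, pow_mul]; norm_num; ring
    · rw [hdo, pow_add, pow_mul]; norm_num; ring
  · rw [hw2]
    unfold CpNorm
    have h8 : 1 ≤ 8 / Real.pi := by
      rw [one_le_div hpi]; linarith [Real.pi_le_four]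
    have h1 : (∫ s, ‖GG a s‖) / Real.pi ≤ 8 / Real.pi * traceNorm (hankelHat ψ) := by
      rw [div_mul_eq_mul_div]
      gcongr
    nlinarith [norm_nonneg (cOne ψ), norm_nonneg (cTwo ψ)]

/-- `ψ ∈ 𝒞′` if and only if there are a complex Borel measure `μ` on the open
unit disc (written in polar form `μ = f · ρ` with `ρ = |μ|` a finite Borel measure and `‖f‖ = 1`
a.e.) and constants `c₊, c₋ ∈ ℂ` such that `ψ(n) = c₊ + (−1)ⁿ c₋ + ∫_𝔻 sⁿ dμ(s)` for all `n` and
`∫_𝔻 |1−s²|/(1−|s|²) d|μ|(s) < ∞`. Moreover, for `ψ ∈ 𝒞′` the data can be chosen so that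
`|c₊| + |c₋| + ∫_𝔻 |1−s²|/(1−|s|²) d|μ|(s) ≤ (8/π)·‖ψ‖_{𝒞′}`. -/
theorem stmt3 (ψ : ℕ → ℂ) :
    (MemCp ψ ↔
      ∃ (cp cm : ℂ) (ρ : Measure (Metric.ball (0:ℂ) 1)) (f : Metric.ball (0:ℂ) 1 → ℂ),
        IsFiniteMeasure ρ ∧
        AEStronglyMeasurable f ρ ∧
        (∀ᵐ s ∂ρ, ‖f s‖ = 1) ∧
        (∀ n : ℕ, ψ n = cp + (-1 : ℂ) ^ n * cm + ∫ s, f s * (s : ℂ) ^ n ∂ρ) ∧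
        Integrable
          (fun s : Metric.ball (0:ℂ) 1 => ‖1 - (s : ℂ) ^ 2‖ / (1 - ‖(s : ℂ)‖ ^ 2)) ρ) ∧
    (MemCp ψ →
      ∃ (cp cm : ℂ) (ρ : Measure (Metric.ball (0:ℂ) 1)) (f : Metric.ball (0:ℂ) 1 → ℂ),
        IsFiniteMeasure ρ ∧
        AEStronglyMeasurable f ρ ∧
        (∀ᵐ s ∂ρ, ‖f s‖ = 1) ∧
        (∀ n : ℕ, ψ n = cp + (-1 : ℂ) ^ n * cm + ∫ s, f s * (s : ℂ) ^ n ∂ρ) ∧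
        Integrable
          (fun s : Metric.ball (0:ℂ) 1 => ‖1 - (s : ℂ) ^ 2‖ / (1 - ‖(s : ℂ)‖ ^ 2)) ρ ∧
        ‖cp‖ + ‖cm‖ + ∫ s, ‖1 - (s : ℂ) ^ 2‖ / (1 - ‖(s : ℂ)‖ ^ 2) ∂ρ ≤
          (8 / Real.pi) * CpNorm ψ) := by
  refine ⟨⟨fun h => ?_, ?_⟩, fun h => forward_dir ψ h⟩
  · obtain ⟨cp, cm, ρ, f, h1, h2, h3, h4, h5, -⟩ := forward_dir ψ h
    exact ⟨cp, cm, ρ, f, h1, h2, h3, h4, h5⟩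
  · rintro ⟨cp, cm, ρ, f, h1, h2, h3, h4, h5⟩
    exact reverse_dir ψ cp cm ρ f h1 h2 h3 h4 h5

end
end
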